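/- A BIBS system is ROS if and only if it admits an ROS-Lyapunov function. -/

import Mathlib

open MeasureTheory Set Filter Topology
open scoped ENNReal NNReal

noncomputable section

/-- A function of class `K`: continuous, strictly increasing on `[0,∞)` and vanishing at `0`. -/
def IsClassK (α : ℝ → ℝ) : Prop :=
  ContinuousOn α (Ici 0) ∧ StrictMonoOn α (Ici 0) ∧ α 0 = 0

/-- A function of class `K∞`: class `K` and unbounded. -/
def IsClassKInfty (α : ℝ → ℝ) : Prop :=
  IsClassK α ∧ Tendsto α atTop atTop

/-- A function of class `KL`. -/
def IsClassKL (β : ℝ → ℝ → ℝ) : Prop :=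
  (∀ t ∈ Ici (0:ℝ), IsClassK fun s => β s t) ∧
  ∀ s ∈ Ici (0:ℝ), AntitoneOn (fun t => β s t) (Ici 0) ∧
    Tendsto (fun t => β s t) atTop (𝓝 0)

/-- Admissible inputs: measurable and locally essentially bounded on `[0,∞)`. -/
def IsInput {m : ℕ} (u : ℝ → EuclideanSpace ℝ (Fin m)) : Prop :=
  Measurable u ∧ ∀ T > (0:ℝ), ∃ C : ℝ, ∀ᵐ t ∂(volume.restrict (Icc 0 T)), ‖u t‖ ≤ C

/-- The essential supremum norm of an input over `[0,∞)`, as an extended nonnegative real. -/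
def uNormE {m : ℕ} (u : ℝ → EuclideanSpace ℝ (Fin m)) : ℝ≥0∞ :=
  essSup (fun t => (‖u t‖₊ : ℝ≥0∞)) (volume.restrict (Ici 0))

/-- An input which is (globally) essentially bounded on `[0,∞)`. -/
def BddInput {m : ℕ} (u : ℝ → EuclideanSpace ℝ (Fin m)) : Prop := uNormE u ≠ ⊤

/-- The essential supremum norm `‖u‖` of an input, as a real number. -/
def uNorm {m : ℕ} (u : ℝ → EuclideanSpace ℝ (Fin m)) : ℝ := (uNormE u).toReal

/-- `x` is the solution map of the forward-complete system `ẋ = f(x,u)`: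
for every initial state `ξ` and admissible input `u`, `t ↦ x t ξ u` solves the corresponding
integral equation on all of `[0,∞)`. -/
def IsSolutionMap {n m : ℕ}
    (f : EuclideanSpace ℝ (Fin n) → EuclideanSpace ℝ (Fin m) → EuclideanSpace ℝ (Fin n))
    (x : ℝ → EuclideanSpace ℝ (Fin n) → (ℝ → EuclideanSpace ℝ (Fin m)) →
      EuclideanSpace ℝ (Fin n)) : Prop :=
  ∀ ξ u, IsInput u → ∀ t ∈ Ici (0:ℝ),
    x t ξ u = ξ + ∫ s in (0:ℝ)..t, f (x s ξ u) (u s)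

/-- The system is bounded-input bounded-state (BIBS): it is forward complete (encoded by the
solution-map property) and trajectories are bounded in terms of a class-`K` function of the
initial state and of the input norm. -/
def IsBIBS {n m : ℕ}
    (f : EuclideanSpace ℝ (Fin n) → EuclideanSpace ℝ (Fin m) → EuclideanSpace ℝ (Fin n))
    (x : ℝ → EuclideanSpace ℝ (Fin n) → (ℝ → EuclideanSpace ℝ (Fin m)) →
      EuclideanSpace ℝ (Fin n)) : Prop :=
  IsSolutionMap f x ∧ ∃ σ : ℝ → ℝ, IsClassK σ ∧ ∀ ξ u, IsInput u → BddInput u →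
    ∀ t ∈ Ici (0:ℝ), ‖x t ξ u‖ ≤ max (σ ‖ξ‖) (σ (uNorm u))

/-- Input-to-output stability (IOS). -/
def IsIOS {n m p : ℕ}
    (h : EuclideanSpace ℝ (Fin n) → EuclideanSpace ℝ (Fin p))
    (x : ℝ → EuclideanSpace ℝ (Fin n) → (ℝ → EuclideanSpace ℝ (Fin m)) →
      EuclideanSpace ℝ (Fin n)) : Prop :=
  ∃ β γ, IsClassKL β ∧ IsClassK γ ∧ ∀ ξ u, IsInput u → BddInput u →
    ∀ t ∈ Ici (0:ℝ), ‖h (x t ξ u)‖ ≤ max (β ‖ξ‖ t) (γ (uNorm u))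

/-- An admissible disturbance: a measurable function essentially bounded by `1` on `[0,∞)`. -/
def IsDisturbance {m : ℕ} (d : ℝ → EuclideanSpace ℝ (Fin m)) : Prop :=
  Measurable d ∧ ∀ᵐ t ∂(volume.restrict (Ici (0:ℝ))), ‖d t‖ ≤ 1

/-- `z` solves the closed-loop system `ẋ = g(x,d) := f(x, d·λ(|h(x)|))` on `[0,∞)` with
initial state `ξ` and disturbance `d`. -/
def SolvesClosedLoop {n m p : ℕ}
    (f : EuclideanSpace ℝ (Fin n) → EuclideanSpace ℝ (Fin m) → EuclideanSpace ℝ (Fin n))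
    (h : EuclideanSpace ℝ (Fin n) → EuclideanSpace ℝ (Fin p))
    (lam : ℝ → ℝ) (ξ : EuclideanSpace ℝ (Fin n))
    (d : ℝ → EuclideanSpace ℝ (Fin m)) (z : ℝ → EuclideanSpace ℝ (Fin n)) : Prop :=
  ∀ t ∈ Ici (0:ℝ), z t = ξ + ∫ s in (0:ℝ)..t, f (z s) (lam ‖h (z s)‖ • d s)

/-- Robust output stability (ROS): there are a class-`K∞` function `λ`, smooth on `(0,∞)`,
and a class-`KL` function `β` such that the closed-loop system `ẋ = f(x, d·λ(|h(x)|))` is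
forward complete and all of its outputs satisfy `|y_λ(t,ξ,d)| ≤ β(|ξ|,t)`. -/
def IsROS {n m p : ℕ}
    (f : EuclideanSpace ℝ (Fin n) → EuclideanSpace ℝ (Fin m) → EuclideanSpace ℝ (Fin n))
    (h : EuclideanSpace ℝ (Fin n) → EuclideanSpace ℝ (Fin p)) : Prop :=
  ∃ lam β : _, IsClassKInfty lam ∧ ContDiffOn ℝ (⊤:ℕ∞) lam (Ioi 0) ∧ IsClassKL β ∧
    (∀ ξ d, IsDisturbance d → ∃ z : ℝ → EuclideanSpace ℝ (Fin n),
      SolvesClosedLoop f h lam ξ d z) ∧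
    (∀ ξ d z, IsDisturbance d → SolvesClosedLoop f h lam ξ d z →
      ∀ t ∈ Ici (0:ℝ), ‖h (z t)‖ ≤ β ‖ξ‖ t)

/-- An ROS-Lyapunov function for the system `ẋ = f(x,u)`, `y = h(x)`. -/
def IsROSLyapunov {n m p : ℕ}
    (f : EuclideanSpace ℝ (Fin n) → EuclideanSpace ℝ (Fin m) → EuclideanSpace ℝ (Fin n))
    (h : EuclideanSpace ℝ (Fin n) → EuclideanSpace ℝ (Fin p))
    (V : EuclideanSpace ℝ (Fin n) → ℝ) : Prop :=
  ContDiff ℝ (⊤:ℕ∞) V ∧ (∀ ξ, 0 ≤ V ξ) ∧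
  (∃ α₁ α₂ : ℝ → ℝ, IsClassKInfty α₁ ∧ IsClassKInfty α₂ ∧
    ∀ ξ, α₁ ‖h ξ‖ ≤ V ξ ∧ V ξ ≤ α₂ ‖ξ‖) ∧
  ∃ χ : ℝ → ℝ, IsClassK χ ∧ ∃ α₃ : ℝ → ℝ → ℝ,
    (∀ r ∈ Ici (0:ℝ), IsClassK fun s => α₃ s r) ∧
    (∀ s ∈ Ici (0:ℝ), AntitoneOn (fun r => α₃ s r) (Ici 0)) ∧
    ∀ ξ μ, χ ‖μ‖ ≤ ‖h ξ‖ → fderiv ℝ V ξ (f ξ μ) ≤ -α₃ (V ξ) ‖ξ‖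

/-! ### Comparison functions -/

section Comparison

theorem IsClassK.nonneg {α : ℝ → ℝ} (hα : IsClassK α) {s : ℝ} (hs : 0 ≤ s) : 0 ≤ α s := by
  rw [← hα.2.2]
  exact hα.2.1.monotoneOn self_mem_Ici hs hs

theorem IsClassK.le_of_le {α : ℝ → ℝ} (hα : IsClassK α) {s t : ℝ} (hs : 0 ≤ s) (hst : s ≤ t) :
    α s ≤ α t :=
  hα.2.1.monotoneOn hs (hs.trans hst) hst

theorem IsClassK.pos {α : ℝ → ℝ} (hα : IsClassK α) {s : ℝ} (hs : 0 < s) : 0 < α s := by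
  have := hα.2.1 self_mem_Ici hs.le hs
  rwa [hα.2.2] at this

/-- Class-`K∞` functions have class-`K∞` inverses. -/
theorem IsClassKInfty.exists_inverse {α : ℝ → ℝ} (hα : IsClassKInfty α) :
    ∃ γ : ℝ → ℝ, IsClassKInfty γ ∧ (∀ s, 0 ≤ s → γ (α s) = s) ∧ ∀ s, 0 ≤ s → α (γ s) = s := by
  obtain ⟨⟨hc, hm, h0⟩, ht⟩ := hα
  set e : ℝ → ℝ := fun s => α (max s 0) + min s 0 with he
  have hpos : ∀ s, 0 ≤ s → e s = α s := fun s hs => by simp [he, hs]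
  have hneg : ∀ s, s ≤ 0 → e s = s := fun s hs => by simp [he, hs, h0]
  have hec : Continuous e := by
    refine Continuous.add ?_ (by fun_prop)
    exact hc.comp_continuous (by fun_prop) fun s => mem_Ici.2 (le_max_right _ _)
  have hem : StrictMono e := by
    intro s t hst
    rcases le_or_gt s 0 with hs | hs
    · rcases le_or_gt t 0 with htt | htt
      · rwa [hneg s hs, hneg t htt]
      · rw [hneg s hs, hpos t htt.le]
        have := hm self_mem_Ici htt.le htt
        rw [h0] at this
        linarith
    · rw [hpos s hs.le, hpos t (hs.trans hst).le]
      exact hm hs.le (hs.trans hst).le hst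
  have hetop : Tendsto e atTop atTop :=
    ht.congr' ((eventually_ge_atTop 0).mono fun s hs => (hpos s hs).symm)
  have hebot : Tendsto e atBot atBot :=
    tendsto_id.congr' ((eventually_le_atBot 0).mono fun s hs => (hneg s hs).symm)
  set o := hem.orderIsoOfSurjective e (hec.surjective hetop hebot) with ho
  have hoe : ∀ s, o s = e s := fun s => rfl
  have hinv : ∀ s, 0 ≤ s → 0 ≤ o.symm s := by
    intro s hs
    by_contra! hlt
    have : o (o.symm s) = o.symm s := by rw [hoe, hneg _ hlt.le]
    rw [o.apply_symm_apply] at this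
    linarith
  refine ⟨o.symm, ⟨⟨o.symm.continuous.continuousOn, o.symm.strictMono.strictMonoOn _, ?_⟩,
    o.symm.tendsto_atTop⟩, fun s hs => ?_, fun s hs => ?_⟩
  · have : o 0 = 0 := by rw [hoe, hneg 0 le_rfl]
    rw [← this, o.symm_apply_apply, this]
  · rw [← hpos s hs, ← hoe, o.symm_apply_apply]
  · rw [← hpos _ (hinv s hs), ← hoe, o.apply_symm_apply]

/-- The averages `∫₁² M(sv) dv` of a monotone function regularise it from above. -/
theorem average_regularization {M : ℝ → ℝ} (hM : Monotone M) (h0 : ∀ s ≤ 0, M s = 0)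
    (hlim : Tendsto M (𝓝[≥] 0) (𝓝 0)) :
    ContinuousOn (fun s => ∫ v in (1:ℝ)..2, M (s * v)) (Ici 0) ∧
    MonotoneOn (fun s => ∫ v in (1:ℝ)..2, M (s * v)) (Ici 0) ∧
    ∀ s, 0 ≤ s → M s ≤ ∫ v in (1:ℝ)..2, M (s * v) ∧ ∫ v in (1:ℝ)..2, M (s * v) ≤ M (s * 2) := by
  have hmono : ∀ s, 0 ≤ s → Monotone fun v => M (s * v) := fun s hs v w hvw =>
    hM (mul_le_mul_of_nonneg_left hvw hs)
  have hint : ∀ s, 0 ≤ s → IntervalIntegrable (fun v => M (s * v)) volume 1 2 := fun s hs =>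
    (hmono s hs).intervalIntegrable
  have hbd : ∀ s, 0 ≤ s → M s ≤ ∫ v in (1:ℝ)..2, M (s * v) ∧
      ∫ v in (1:ℝ)..2, M (s * v) ≤ M (s * 2) := by
    intro s hs
    constructor
    · have := intervalIntegral.integral_mono_on (a := (1:ℝ)) (b := 2) (f := fun _ => M s)
        (by norm_num) (by simp) (hint s hs) fun v hv => hM (by nlinarith [hv.1])
      have h1 : ∫ _ in (1:ℝ)..2, M s = M s := by
        rw [intervalIntegral.integral_const]; norm_num
      linarith
    · have := intervalIntegral.integral_mono_on (a := (1:ℝ)) (b := 2) (g := fun _ => M (s * 2))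
        (by norm_num) (hint s hs) (by simp) fun v hv => hM (by nlinarith [hv.2])
      have h1 : ∫ _ in (1:ℝ)..2, M (s * 2) = M (s * 2) := by
        rw [intervalIntegral.integral_const]; norm_num
      linarith
  refine ⟨?_, ?_, hbd⟩
  · intro s hs
    rcases eq_or_lt_of_le (show (0:ℝ) ≤ s from hs) with rfl | hpos
    · have hval : ∫ v in (1:ℝ)..2, M (0 * v) = 0 := by simp [h0 0 le_rfl]
      change Tendsto _ _ (𝓝 (∫ v in (1:ℝ)..2, M (0 * v)))
      rw [hval]
      have hlim2 : Tendsto (fun s : ℝ => M (s * 2)) (𝓝[≥] 0) (𝓝 0) := by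
        refine hlim.comp (tendsto_nhdsWithin_iff.2 ⟨?_, ?_⟩)
        · have : Tendsto (fun s : ℝ => s * 2) (𝓝 0) (𝓝 (0 * 2)) := by
            exact (continuous_id.mul continuous_const).tendsto 0
          rw [zero_mul] at this
          exact this.mono_left nhdsWithin_le_nhds
        · filter_upwards [self_mem_nhdsWithin] with s hs
          exact mem_Ici.2 (mul_nonneg (mem_Ici.1 hs) (by norm_num))
      refine tendsto_of_tendsto_of_tendsto_of_le_of_le' hlim hlim2 ?_ ?_ <;>
      filter_upwards [self_mem_nhdsWithin] with s hs
      · exact (hbd s hs).1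
      · exact (hbd s hs).2
    · have hP : Continuous fun x => ∫ v in (0:ℝ)..x, M v :=
        intervalIntegral.continuous_primitive (fun a b => hM.intervalIntegrable) 0
      have heq : (fun s => s⁻¹ * ((∫ v in (0:ℝ)..(s * 2), M v) - ∫ v in (0:ℝ)..s, M v))
          =ᶠ[𝓝 s] fun s => ∫ v in (1:ℝ)..2, M (s * v) := by
        filter_upwards [lt_mem_nhds hpos] with r hr
        rw [intervalIntegral.integral_comp_mul_left M hr.ne', smul_eq_mul, mul_one,
          intervalIntegral.integral_interval_sub_left hM.intervalIntegrable hM.intervalIntegrable]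
      refine ContinuousAt.continuousWithinAt (ContinuousAt.congr ?_ heq)
      refine (continuousAt_inv₀ hpos.ne').mul ?_
      exact ((hP.comp (continuous_id.mul continuous_const)).sub hP).continuousAt
  · intro s hs t ht hst
    refine intervalIntegral.integral_mono_on (by norm_num) (hint s hs) (hint t ht) fun v hv => ?_
    exact hM (mul_le_mul_of_nonneg_right hst (by linarith [hv.1]))

/-- A nondecreasing function continuous at `0` is majorised by a class-`K∞` function. -/
theorem exists_classKInfty_ge {M : ℝ → ℝ} (hM : Monotone M) (h0 : ∀ s ≤ 0, M s = 0)
    (hlim : Tendsto M (𝓝[≥] 0) (𝓝 0)) :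
    ∃ α, IsClassKInfty α ∧ ∀ s, 0 ≤ s → M s ≤ α s := by
  obtain ⟨hc, hm, hb⟩ := average_regularization hM h0 hlim
  have hnn : ∀ s, 0 ≤ s → 0 ≤ M s := fun s hs => (h0 0 le_rfl).symm.le.trans (hM hs)
  refine ⟨fun s => (∫ v in (1:ℝ)..2, M (s * v)) + s, ⟨⟨hc.add continuousOn_id, ?_, ?_⟩, ?_⟩, ?_⟩
  · intro s hs t ht hst
    exact add_lt_add_of_le_of_lt (hm hs ht hst.le) hst
  · simp [h0 0 le_rfl]
  · refine tendsto_atTop_mono' _ ?_ tendsto_id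
    filter_upwards [eventually_ge_atTop 0] with s hs
    have := (hb s hs).1
    have := hnn s hs
    simp only [id]
    linarith
  · intro s hs
    have := (hb s hs).1
    linarith

/-- Uniform attractivity together with a class-`K` overshoot bound yields a class-`KL` bound. -/
theorem exists_classKL_ge {ψ : ℝ → ℝ → ℝ} (hmono : ∀ t, 0 ≤ t → Monotone fun s => ψ s t)
    (h0 : ∀ s ≤ 0, ∀ t, 0 ≤ t → ψ s t = 0)
    (hlim : Tendsto (fun s => ψ s 0) (𝓝[≥] 0) (𝓝 0))
    (hanti : ∀ s, AntitoneOn (fun t => ψ s t) (Ici 0))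
    (htend : ∀ s, Tendsto (fun t => ψ s t) atTop (𝓝 0)) :
    ∃ β, IsClassKL β ∧ ∀ s t, 0 ≤ s → 0 ≤ t → ψ s t ≤ β s t := by
  have hnn : ∀ s t, 0 ≤ s → 0 ≤ t → 0 ≤ ψ s t := fun s t hs ht =>
    (h0 0 le_rfl t ht).symm.le.trans (hmono t ht hs)
  have hlimt : ∀ t, 0 ≤ t → Tendsto (fun s => ψ s t) (𝓝[≥] 0) (𝓝 0) := by
    intro t ht
    refine tendsto_of_tendsto_of_tendsto_of_le_of_le' tendsto_const_nhds hlim ?_ ?_ <;>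
    filter_upwards [self_mem_nhdsWithin] with s hs
    · exact hnn s t hs ht
    · exact hanti s self_mem_Ici ht ht
  have key := fun t (ht : 0 ≤ t) =>
    average_regularization (hmono t ht) (fun s hs => h0 s hs t ht) (hlimt t ht)
  refine ⟨fun s t => (∫ v in (1:ℝ)..2, ψ (s * v) t) + s * Real.exp (-t), ⟨?_, ?_⟩, ?_⟩
  · intro t ht
    obtain ⟨hc, hm, hb⟩ := key t ht
    refine ⟨hc.add (continuousOn_id.mul continuousOn_const), ?_, ?_⟩
    · intro a ha b hb hab
      exact add_lt_add_of_le_of_lt (hm ha hb hab.le)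
        (mul_lt_mul_of_pos_right hab (Real.exp_pos _))
    · simp [h0 0 le_rfl t ht]
  · intro s hs
    constructor
    · intro t ht r hr htr
      refine add_le_add ?_ ?_
      · refine intervalIntegral.integral_mono_on (by norm_num) ?_ ?_ fun v hv => hanti _ ht hr htr
        · exact Monotone.intervalIntegrable fun v w hvw =>
            hmono r hr (mul_le_mul_of_nonneg_left hvw hs)
        · exact Monotone.intervalIntegrable fun v w hvw =>
            hmono t ht (mul_le_mul_of_nonneg_left hvw hs)
      · exact mul_le_mul_of_nonneg_left (Real.exp_le_exp.2 (by linarith)) hs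
    · have h1 : Tendsto (fun t => ∫ v in (1:ℝ)..2, ψ (s * v) t) atTop (𝓝 0) := by
        refine tendsto_of_tendsto_of_tendsto_of_le_of_le' tendsto_const_nhds (htend (s * 2)) ?_ ?_ <;>
        filter_upwards [eventually_ge_atTop 0] with t ht
        · exact (hnn s t hs ht).trans ((key t ht).2.2 s hs).1
        · exact ((key t ht).2.2 s hs).2
      have h2 : Tendsto (fun t => s * Real.exp (-t)) atTop (𝓝 (s * 0)) :=
        (Real.tendsto_exp_neg_atTop_nhds_zero).const_mul s
      simpa using h1.add h2
  · intro s t hs ht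
    have := ((key t ht).2.2 s hs).1
    have := mul_nonneg hs (Real.exp_pos (-t)).le
    linarith

end Comparison

section Minorant

/-- A nondecreasing positive function tending to infinity has a `1`-Lipschitz nondecreasing
minorant with the same properties. -/
theorem exists_lipschitz_minorant {a : ℝ → ℝ} (hmono : MonotoneOn a (Ici 0)) (h0 : a 0 = 0)
    (hpos : ∀ s, 0 < s → 0 < a s) (htop : Tendsto a atTop atTop) :
    ∃ b : ℝ → ℝ, (∀ s t, |b s - b t| ≤ |s - t|) ∧ MonotoneOn b (Ici 0) ∧ b 0 = 0 ∧
      (∀ s, 0 < s → 0 < b s) ∧ Tendsto b atTop atTop ∧ ∀ s, 0 ≤ s → b s ≤ a s := by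
  have hann : ∀ s, 0 ≤ s → 0 ≤ a s := fun s hs => h0 ▸ hmono self_mem_Ici hs hs
  set b : ℝ → ℝ := fun s => sInf ((fun τ => a τ + |s - τ|) '' Ici 0) with hb
  have hbdd : ∀ s, BddBelow ((fun τ => a τ + |s - τ|) '' Ici 0) := by
    intro s
    refine ⟨0, ?_⟩
    rintro _ ⟨τ, hτ, rfl⟩
    exact add_nonneg (hann τ hτ) (abs_nonneg _)
  have hle : ∀ s τ, 0 ≤ τ → b s ≤ a τ + |s - τ| := fun s τ hτ =>
    csInf_le (hbdd s) ⟨τ, hτ, rfl⟩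
  have hge : ∀ s r, (∀ τ, 0 ≤ τ → r ≤ a τ + |s - τ|) → r ≤ b s := by
    intro s r hr
    refine le_csInf ⟨_, ⟨0, self_mem_Ici, rfl⟩⟩ ?_
    rintro _ ⟨τ, hτ, rfl⟩
    exact hr τ hτ
  have hlow : ∀ s, 0 ≤ s → min (a (s / 2)) (s / 2) ≤ b s := by
    intro s hs
    refine hge s _ fun τ hτ => ?_
    rcases le_or_gt (s / 2) τ with h | h
    · exact (min_le_left _ _).trans ((hmono (show 0 ≤ s / 2 by linarith) hτ h).trans
        (le_add_of_nonneg_right (abs_nonneg _)))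
    · refine (min_le_right _ _).trans ?_
      have := le_abs_self (s - τ)
      have := hann τ hτ
      linarith
  have hlip : ∀ s t, b s - b t ≤ |s - t| := by
    intro s t
    have : b s - |s - t| ≤ b t := hge t _ fun τ hτ => by
      have := hle s τ hτ
      have := abs_sub_le s t τ
      linarith
    linarith
  have hba : ∀ s, 0 ≤ s → b s ≤ a s := fun s hs => by simpa using hle s s hs
  refine ⟨b, fun s t => abs_le.2 ⟨?_, hlip s t⟩, ?_, ?_, ?_, ?_, hba⟩
  · have := hlip t s
    rw [abs_sub_comm] at this
    linarith
  · intro s hs t ht hst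
    refine hge t _ fun τ hτ => ?_
    rcases le_or_gt s τ with h | h
    · exact (hba s hs).trans ((hmono hs hτ h).trans (le_add_of_nonneg_right (abs_nonneg _)))
    · have := hle s τ hτ
      rw [abs_of_pos (by linarith)] at this
      have := le_abs_self (t - τ)
      linarith
  · refine le_antisymm ((hba 0 le_rfl).trans h0.le) (hge 0 0 fun τ hτ => ?_)
    exact add_nonneg (hann τ hτ) (abs_nonneg _)
  · intro s hs
    exact (lt_min (hpos _ (by linarith)) (by linarith)).trans_le (hlow s hs.le)
  · have hhalf : Tendsto (fun s : ℝ => s / 2) atTop atTop := tendsto_id.atTop_div_const two_pos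
    refine tendsto_atTop.2 fun r => ?_
    filter_upwards [eventually_ge_atTop 0, tendsto_atTop.1 hhalf r,
      tendsto_atTop.1 (htop.comp hhalf) r] with s hs h1 h2
    exact (le_min h2 h1).trans (hlow s hs)

/-- A nondecreasing positive function tending to infinity has a class-`K∞` minorant which is
Lipschitz and smooth away from `0`. -/
theorem exists_smooth_classKInfty_le {a : ℝ → ℝ} (hmono : MonotoneOn a (Ici 0)) (h0 : a 0 = 0)
    (hpos : ∀ s, 0 < s → 0 < a s) (htop : Tendsto a atTop atTop) :
    ∃ l : ℝ → ℝ, IsClassKInfty l ∧ ContDiffOn ℝ (⊤:ℕ∞) l (Ioi 0) ∧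
      (∀ s t, 0 ≤ s → 0 ≤ t → |l s - l t| ≤ 2 * |s - t|) ∧ ∀ s, 0 ≤ s → l s ≤ a s := by
  obtain ⟨b, hblip, hbm, hb0, hbpos, hbtop, hba⟩ := exists_lipschitz_minorant hmono h0 hpos htop
  have hbc : Continuous b := by
    refine LipschitzWith.continuous (K := 1) (LipschitzWith.of_dist_le_mul fun s t => ?_)
    simpa [Real.dist_eq] using hblip s t
  let φ : ContDiffBump (0:ℝ) := ⟨1 / 2, 1, by norm_num, by norm_num⟩
  set ψ : ℝ → ℝ := φ.normed volume with hψ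
  have hψc : Continuous ψ := φ.continuous_normed
  have hψs : HasCompactSupport ψ := φ.hasCompactSupport_normed
  have hψnn : ∀ t, 0 ≤ ψ t := fun t => φ.nonneg_normed t
  have hψ1 : ∫ t, ψ t = 1 := φ.integral_normed
  have hψsupp : ∀ t, ψ t ≠ 0 → |t| < 1 := by
    intro t ht
    have : t ∈ Function.support (φ.normed volume) := ht
    rw [φ.support_normed_eq] at this
    simpa [φ] using this
  set c : ℝ → ℝ := fun s => ∫ t, ψ t * b (s * Real.exp (-2 - t)) with hc
  have hint : ∀ s, Integrable fun t => ψ t * b (s * Real.exp (-2 - t)) := fun s =>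
    (hψc.mul (hbc.comp (by fun_prop))).integrable_of_hasCompactSupport (hψs.mul_right)
  have hcint : ∀ r, Integrable fun t => ψ t * r := fun r =>
    (hψc.integrable_of_hasCompactSupport hψs).mul_const r
  have hcval : ∀ r, ∫ t, ψ t * r = r := fun r => by rw [integral_mul_const, hψ1, one_mul]
  have hup : ∀ s r, (∀ t, |t| < 1 → b (s * Real.exp (-2 - t)) ≤ r) → c s ≤ r := by
    intro s r hr
    rw [← hcval r]
    refine integral_mono (hint s) (hcint r) fun t => ?_
    by_cases ht : ψ t = 0
    · simp [ht]
    · exact mul_le_mul_of_nonneg_left (hr t (hψsupp t ht)) (hψnn t)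
  have hdown : ∀ s r, (∀ t, |t| < 1 → r ≤ b (s * Real.exp (-2 - t))) → r ≤ c s := by
    intro s r hr
    rw [← hcval r]
    refine integral_mono (hcint r) (hint s) fun t => ?_
    by_cases ht : ψ t = 0
    · simp [ht]
    · exact mul_le_mul_of_nonneg_left (hr t (hψsupp t ht)) (hψnn t)
  have hexp : ∀ t : ℝ, |t| < 1 → Real.exp (-3) ≤ Real.exp (-2 - t) ∧ Real.exp (-2 - t) ≤ 1 := by
    intro t ht
    have := abs_lt.1 ht
    exact ⟨Real.exp_le_exp.2 (by linarith), Real.exp_le_one_iff.2 (by linarith)⟩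
  have hcb : ∀ s, 0 ≤ s → c s ≤ b s := fun s hs => hup s _ fun t ht =>
    hbm (mul_nonneg hs (Real.exp_pos _).le) hs (mul_le_of_le_one_right hs (hexp t ht).2)
  have hbc' : ∀ s, 0 ≤ s → b (s * Real.exp (-3)) ≤ c s := fun s hs => hdown s _ fun t ht =>
    hbm (mul_nonneg hs (Real.exp_pos _).le) (mul_nonneg hs (Real.exp_pos _).le)
      (mul_le_mul_of_nonneg_left (hexp t ht).1 hs)
  have hbnn : ∀ s, 0 ≤ s → 0 ≤ b s := fun s hs => hb0 ▸ hbm self_mem_Ici hs hs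
  have hcnn : ∀ s, 0 ≤ s → 0 ≤ c s := fun s hs =>
    (hbnn _ (mul_nonneg hs (Real.exp_pos _).le)).trans (hbc' s hs)
  have hcpos : ∀ s, 0 < s → 0 < c s := fun s hs =>
    (hbpos _ (mul_pos hs (Real.exp_pos _))).trans_le (hbc' s hs.le)
  have hcs : ∀ s, 0 ≤ s → c s ≤ s := fun s hs => by
    have := hblip s 0
    rw [hb0, sub_zero, sub_zero, abs_of_nonneg hs] at this
    exact (hcb s hs).trans ((le_abs_self _).trans this)
  have hcm : MonotoneOn c (Ici 0) := by
    intro s hs r hr hsr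
    refine integral_mono (hint s) (hint r) fun t => mul_le_mul_of_nonneg_left ?_ (hψnn t)
    exact hbm (mul_nonneg hs (Real.exp_pos _).le) (mul_nonneg hr (Real.exp_pos _).le)
      (mul_le_mul_of_nonneg_right hsr (Real.exp_pos _).le)
  have hclip : ∀ s r, |c s - c r| ≤ |s - r| := by
    intro s r
    rw [hc]
    simp only
    rw [← integral_sub (hint s) (hint r), ← hcval |s - r|, ← Real.norm_eq_abs]
    refine norm_integral_le_of_norm_le (hcint _) (Eventually.of_forall fun t => ?_)
    rw [← mul_sub, Real.norm_eq_abs, abs_mul, abs_of_nonneg (hψnn t)]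
    by_cases ht : ψ t = 0
    · simp [ht]
    refine mul_le_mul_of_nonneg_left ((hblip _ _).trans ?_) (hψnn t)
    rw [← sub_mul, abs_mul, abs_of_pos (Real.exp_pos _)]
    exact mul_le_of_le_one_right (abs_nonneg _) (hexp t (hψsupp t ht)).2
  have hcc : Continuous c := by
    refine LipschitzWith.continuous (K := 1) (LipschitzWith.of_dist_le_mul fun s t => ?_)
    simpa [Real.dist_eq] using hclip s t
  have hcsmooth : ContDiffOn ℝ (⊤:ℕ∞) c (Ioi 0) := by
    have hB : Continuous fun y => b (Real.exp (y - 2)) := hbc.comp (by fun_prop)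
    have h1 : ContDiff ℝ (⊤:ℕ∞)
        (convolution ψ (fun y => b (Real.exp (y - 2))) (ContinuousLinearMap.mul ℝ ℝ) volume) :=
      hψs.contDiff_convolution_left _ φ.contDiff_normed hB.locallyIntegrable
    have h2 : ContDiffOn ℝ (⊤:ℕ∞) Real.log (Ioi 0) :=
      Real.contDiffOn_log.mono fun s hs => ne_of_gt hs
    refine (h1.comp_contDiffOn h2).congr fun s hs => ?_
    simp only [Function.comp_apply, convolution_def, ContinuousLinearMap.mul_apply', hc]
    refine integral_congr_ae (Eventually.of_forall fun t => ?_)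
    simp only
    rw [show Real.log s - t - 2 = Real.log s + (-2 - t) by ring, Real.exp_add, Real.exp_log hs]
  refine ⟨fun s => s / (1 + s) * c s, ⟨⟨?_, ?_, by simp⟩, ?_⟩, ?_, ?_, ?_⟩
  · refine ContinuousOn.mul (ContinuousOn.div continuousOn_id (by fun_prop) ?_) hcc.continuousOn
    intro s hs
    have : (0:ℝ) ≤ s := hs
    positivity
  · intro s hs r hr hsr
    have hs' : (0:ℝ) ≤ s := hs
    have hr' : (0:ℝ) ≤ r := hr
    have hlt : s / (1 + s) < r / (1 + r) := by
      rw [div_lt_div_iff₀ (by linarith) (by linarith)]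
      nlinarith
    calc s / (1 + s) * c s ≤ s / (1 + s) * c r :=
          mul_le_mul_of_nonneg_left (hcm hs hr hsr.le) (by positivity)
      _ < r / (1 + r) * c r := mul_lt_mul_of_pos_right hlt (hcpos r (by linarith))
  · have hctop : Tendsto (fun s => 1 / 2 * b (s * Real.exp (-3))) atTop atTop :=
      (hbtop.comp (tendsto_id.atTop_mul_const (Real.exp_pos _))).const_mul_atTop (by norm_num)
    refine tendsto_atTop_mono' _ ?_ hctop
    filter_upwards [eventually_ge_atTop 1] with s hs
    have h1 : 1 / 2 ≤ s / (1 + s) := by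
      rw [div_le_div_iff₀ (by linarith) (by linarith)]
      linarith
    exact mul_le_mul h1 (hbc' s (by linarith)) (hbnn _ (by positivity)) (by positivity)
  · refine ContDiffOn.mul (ContDiffOn.div contDiffOn_id (by fun_prop) ?_) hcsmooth
    intro s hs
    have : (0:ℝ) < s := hs
    positivity
  · intro s t hs ht
    have h1 : s / (1 + s) * c s - t / (1 + t) * c t
        = s / (1 + s) * (c s - c t) + c t / ((1 + s) * (1 + t)) * (s - t) := by
      field_simp
      ring
    rw [h1]
    have h2 : |s / (1 + s) * (c s - c t)| ≤ 1 * |s - t| := by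
      rw [abs_mul, abs_of_nonneg (by positivity)]
      refine mul_le_mul ?_ (hclip s t) (abs_nonneg _) zero_le_one
      rw [div_le_one (by linarith)]
      linarith
    have h3 : |c t / ((1 + s) * (1 + t)) * (s - t)| ≤ 1 * |s - t| := by
      rw [abs_mul, abs_of_nonneg (div_nonneg (hcnn t ht) (by positivity))]
      refine mul_le_mul_of_nonneg_right ?_ (abs_nonneg _)
      rw [div_le_one (by positivity)]
      nlinarith [hcs t ht, mul_nonneg hs ht]
    exact (abs_add_le _ _).trans (by linarith)
  · intro s hs
    refine le_trans ?_ ((hcb s hs).trans (hba s hs))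
    refine mul_le_of_le_one_left (hcnn s hs) ?_
    rw [div_le_one (by linarith)]
    linarith

end Minorant

set_option linter.unusedSectionVars false

/-! ### Carathéodory trajectories -/

section Trajectory

variable {E D : Type*} [NormedAddCommGroup E] [NormedSpace ℝ E] [ProperSpace E]
  [NormedAddCommGroup D] [ProperSpace D] [MeasurableSpace D] [BorelSpace D]

/-- `z` is a trajectory on `[0,T]` of `ż = H(z,w)` starting at `ξ`. -/
def IsTrajectoryOn (H : E × D → E) (w : ℝ → D) (ξ : E) (z : ℝ → E) (T : ℝ) : Prop :=
  ContinuousOn z (Icc 0 T) ∧ ∀ t ∈ Icc 0 T, z t = ξ + ∫ s in (0:ℝ)..t, H (z s, w s)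

variable {H : E × D → E} {w : ℝ → D} {ξ : E} {z : ℝ → E} {T C : ℝ}

theorem Continuous.exists_norm_le_of_norm_le (hH : Continuous H) (R C : ℝ) :
    ∃ M, 0 ≤ M ∧ ∀ x v, ‖x‖ ≤ R → ‖v‖ ≤ C → ‖H (x, v)‖ ≤ M := by
  obtain ⟨M, hM⟩ := ((isCompact_closedBall (0:E) R).prod
    (isCompact_closedBall (0:D) C)).exists_bound_of_continuousOn hH.continuousOn
  refine ⟨max M 0, le_max_right _ _, fun x v hx hv => (hM (x, v) ⟨?_, ?_⟩).trans (le_max_left _ _)⟩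
  · simpa using hx
  · simpa using hv

theorem integrableOn_field (hH : Continuous H) (hw : Measurable w) (hwb : ∀ s, ‖w s‖ ≤ C)
    {S : Set ℝ} (hS : MeasurableSet S) (hfin : volume S ≠ ⊤) (hz : ContinuousOn z S) {R : ℝ}
    (hR : ∀ t ∈ S, ‖z t‖ ≤ R) : IntegrableOn (fun s => H (z s, w s)) S := by
  obtain ⟨M, -, hM⟩ := hH.exists_norm_le_of_norm_le R C
  have : IsFiniteMeasure (volume.restrict S) := isFiniteMeasure_restrict.2 hfin
  refine Integrable.of_bound (C := M) ?_ ?_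
  · exact hH.comp_aestronglyMeasurable
      ((hz.aestronglyMeasurable hS).prodMk hw.aestronglyMeasurable)
  · exact (ae_restrict_iff' hS).2 (Eventually.of_forall fun t ht => hM _ _ (hR t ht) (hwb t))

theorem IsTrajectoryOn.apply_zero (hz : IsTrajectoryOn H w ξ z T) (hT : 0 ≤ T) : z 0 = ξ := by
  simpa using hz.2 0 ⟨le_rfl, hT⟩

theorem IsTrajectoryOn.congr {D' : Type*} {H' : E × D' → E} {w' : ℝ → D'}
    (hz : IsTrajectoryOn H w ξ z T) (h : ∀ s ∈ Icc 0 T, H (z s, w s) = H' (z s, w' s)) :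
    IsTrajectoryOn H' w' ξ z T := by
  refine ⟨hz.1, fun t ht => (hz.2 t ht).trans ?_⟩
  congr 1
  refine intervalIntegral.integral_congr fun s hs => ?_
  rw [uIcc_of_le ht.1] at hs
  exact h s ⟨hs.1, hs.2.trans ht.2⟩

theorem IsTrajectoryOn.integrableOn (hz : IsTrajectoryOn H w ξ z T)
    (hH : Continuous H) (hw : Measurable w) (hwb : ∀ s, ‖w s‖ ≤ C) :
    IntegrableOn (fun s => H (z s, w s)) (Icc 0 T) := by
  obtain ⟨R, hR⟩ := isCompact_Icc.exists_bound_of_continuousOn hz.1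
  exact integrableOn_field hH hw hwb measurableSet_Icc (by simp) hz.1 hR

theorem IsTrajectoryOn.intervalIntegrable (hz : IsTrajectoryOn H w ξ z T)
    (hH : Continuous H) (hw : Measurable w) (hwb : ∀ s, ‖w s‖ ≤ C) {a b : ℝ}
    (ha : a ∈ Icc 0 T) (hb : b ∈ Icc 0 T) :
    IntervalIntegrable (fun s => H (z s, w s)) volume a b := by
  refine IntegrableOn.intervalIntegrable ((hz.integrableOn hH hw hwb).mono_set ?_)
  exact (convex_Icc (0:ℝ) T).ordConnected.uIcc_subset ha hb

theorem IsTrajectoryOn.sub_eq (hz : IsTrajectoryOn H w ξ z T)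
    (hH : Continuous H) (hw : Measurable w) (hwb : ∀ s, ‖w s‖ ≤ C) {a b : ℝ}
    (ha : a ∈ Icc 0 T) (hb : b ∈ Icc 0 T) :
    z b - z a = ∫ s in a..b, H (z s, w s) := by
  have h0 : (0:ℝ) ∈ Icc 0 T := ⟨le_rfl, ha.1.trans ha.2⟩
  rw [hz.2 a ha, hz.2 b hb, add_sub_add_left_eq_sub, intervalIntegral.integral_interval_sub_left
    (hz.intervalIntegrable hH hw hwb h0 hb) (hz.intervalIntegrable hH hw hwb h0 ha)]

theorem isTrajectoryOn_of_intervalIntegrable (hT : 0 ≤ T)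
    (hz : ∀ t, 0 ≤ t → z t = ξ + ∫ s in (0:ℝ)..t, H (z s, w s))
    (hi : IntervalIntegrable (fun s => H (z s, w s)) volume 0 T) : IsTrajectoryOn H w ξ z T := by
  refine ⟨?_, fun t ht => hz t ht.1⟩
  have h1 := intervalIntegral.continuousOn_primitive_interval
    ((intervalIntegrable_iff' (by simp)).1 hi)
  rw [uIcc_of_le hT] at h1
  exact (continuousOn_const.add h1).congr fun t ht => hz t ht.1

/-- A solution of the integral equation on `[0,∞)` (with the convention that the integral of a
non-integrable function vanishes) is a genuine trajectory as soon as its genuine pieces are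
bounded. -/
theorem isTrajectoryOn_of_forall_eq (hH : Continuous H) (hw : Measurable w)
    (hwb : ∀ s, ‖w s‖ ≤ C) (hz : ∀ t, 0 ≤ t → z t = ξ + ∫ s in (0:ℝ)..t, H (z s, w s))
    {R : ℝ} (hR : ∀ T, 0 ≤ T → IsTrajectoryOn H w ξ z T → ∀ t ∈ Icc 0 T, ‖z t‖ ≤ R)
    (hT : 0 ≤ T) : IsTrajectoryOn H w ξ z T := by
  set F : ℝ → E := fun s => H (z s, w s) with hF
  refine isTrajectoryOn_of_intervalIntegrable hT hz ?_
  by_contra hbad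
  set I : Set ℝ := {t | 0 ≤ t ∧ IntervalIntegrable F volume 0 t} with hI
  have hdown : ∀ t ∈ I, ∀ s, 0 ≤ s → s ≤ t → s ∈ I := fun t ht s hs hst =>
    ⟨hs, ht.2.mono_set (by rw [uIcc_of_le hs, uIcc_of_le ht.1]; exact Icc_subset_Icc_right hst)⟩
  have h0I : (0:ℝ) ∈ I := ⟨le_rfl, IntervalIntegrable.refl⟩
  have hbdd : BddAbove I := by
    refine ⟨T, fun t ht => ?_⟩
    by_contra! hlt
    exact hbad (hdown t ht T hT hlt.le).2
  set S := sSup I with hS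
  have hS0 : 0 ≤ S := le_csSup hbdd h0I
  have htraj : ∀ t ∈ I, IsTrajectoryOn H w ξ z t := fun t ht =>
    isTrajectoryOn_of_intervalIntegrable ht.1 hz ht.2
  have hbound : ∀ t, 0 ≤ t → ‖z t‖ ≤ max R ‖ξ‖ := by
    intro t ht
    by_cases htI : t ∈ I
    · exact (hR t ht (htraj t htI) t ⟨ht, le_rfl⟩).trans (le_max_left _ _)
    · have : ¬ IntervalIntegrable F volume 0 t := fun h => htI ⟨ht, h⟩
      rw [hz t ht, intervalIntegral.integral_undef this, add_zero]
      exact le_max_right _ _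
  have hlt : ∀ t, 0 ≤ t → t < S → t ∈ I := fun t ht htS => by
    obtain ⟨r, hr, htr⟩ := exists_lt_of_lt_csSup ⟨0, h0I⟩ htS
    exact hdown r hr t ht htr.le
  have hgt : ∀ t, S < t → z t = ξ := fun t ht => by
    have h0t : 0 ≤ t := hS0.trans ht.le
    have : ¬ IntervalIntegrable F volume 0 t := fun h => (le_csSup hbdd ⟨h0t, h⟩).not_gt ht
    rw [hz t h0t, intervalIntegral.integral_undef this, add_zero]
  have hcont1 : ContinuousOn z (Ico 0 S) := by
    intro t ht
    obtain ⟨r, htr, hrS⟩ := exists_between ht.2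
    have h1 : ContinuousWithinAt z (Icc 0 r) t :=
      (htraj r (hlt r (ht.1.trans htr.le) hrS)).1 t ⟨ht.1, htr.le⟩
    refine h1.mono_of_mem_nhdsWithin ?_
    filter_upwards [self_mem_nhdsWithin, mem_nhdsWithin_of_mem_nhds (gt_mem_nhds htr)] with s hs hsr
    exact ⟨hs.1, hsr.le⟩
  have hint1 : IntegrableOn F (Ico 0 S) :=
    integrableOn_field hH hw hwb measurableSet_Ico (by simp) hcont1 fun t ht => hbound t ht.1
  have hint2 : IntegrableOn F (Ioc S (S + 1)) :=
    integrableOn_field hH hw hwb measurableSet_Ioc (by simp)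
      (continuousOn_const.congr fun t ht => hgt t ht.1) fun t ht => hbound t (hS0.trans ht.1.le)
  have hint : IntegrableOn F (Icc 0 (S + 1)) := by
    have h3 : IntegrableOn F (Icc 0 S) := (integrableOn_Icc_iff_integrableOn_Ico).2 hint1
    refine (h3.union hint2).mono_set fun t ht => ?_
    rcases le_or_gt t S with h | h
    · exact Or.inl ⟨ht.1, h⟩
    · exact Or.inr ⟨h, ht.2⟩
  have : S + 1 ∈ I :=
    ⟨by linarith, IntegrableOn.intervalIntegrable (by rwa [uIcc_of_le (by linarith)])⟩
  linarith [le_csSup hbdd this]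

/-- Concatenation at time `τ`. -/
def concatAt {X : Type*} (τ : ℝ) (a b : ℝ → X) (s : ℝ) : X := if s ≤ τ then a s else b (s - τ)

theorem Measurable.concatAt {X : Type*} [MeasurableSpace X] {a b : ℝ → X} (ha : Measurable a)
    (hb : Measurable b) (τ : ℝ) : Measurable (concatAt τ a b) :=
  Measurable.ite measurableSet_Iic ha (hb.comp (measurable_id.sub_const τ))

theorem IsTrajectoryOn.concatAt {τ : ℝ} {w₁ : ℝ → D} {z₁ : ℝ → E} (hH : Continuous H)
    (hw : Measurable w) (hwb : ∀ s, ‖w s‖ ≤ C) (hw₁ : Measurable w₁) (hwb₁ : ∀ s, ‖w₁ s‖ ≤ C)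
    (hτ : 0 ≤ τ) (hT : 0 ≤ T) (hz : IsTrajectoryOn H w ξ z τ)
    (hz₁ : IsTrajectoryOn H w₁ (z τ) z₁ T) :
    IsTrajectoryOn H (concatAt τ w w₁) ξ (concatAt τ z z₁) (τ + T) := by
  have hle : ∀ s, s ≤ τ → _root_.concatAt τ z z₁ s = z s := fun s hs => if_pos hs
  have hge : ∀ s, τ ≤ s → _root_.concatAt τ z z₁ s = z₁ (s - τ) := by
    intro s hs
    rcases eq_or_lt_of_le hs with rfl | hs
    · rw [hle _ le_rfl, sub_self, hz₁.apply_zero hT]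
    · exact if_neg hs.not_ge
  constructor
  · have h1 : ContinuousOn (_root_.concatAt τ z z₁) (Icc 0 τ) := hz.1.congr fun s hs => hle s hs.2
    have h2 : ContinuousOn (_root_.concatAt τ z z₁) (Icc τ (τ + T)) := by
      refine ContinuousOn.congr (f := fun s => z₁ (s - τ)) ?_ fun s hs => hge s hs.1
      exact hz₁.1.comp (by fun_prop) fun s hs => ⟨by linarith [hs.1], by linarith [hs.2]⟩
    have h3 := h1.union_of_isClosed h2 isClosed_Icc isClosed_Icc
    rwa [Icc_union_Icc_eq_Icc hτ (by linarith)] at h3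
  · have hfirst : ∀ t ∈ Icc 0 τ, ∫ s in (0:ℝ)..t, H (z s, w s)
        = ∫ s in (0:ℝ)..t, H (_root_.concatAt τ z z₁ s, _root_.concatAt τ w w₁ s) := by
      intro t ht
      refine intervalIntegral.integral_congr fun s hs => ?_
      rw [uIcc_of_le ht.1] at hs
      rw [hle s (hs.2.trans ht.2), show _root_.concatAt τ w w₁ s = w s from
        if_pos (hs.2.trans ht.2)]
    intro t ht
    rcases le_or_gt t τ with htτ | htτ
    · rw [hle t htτ, hz.2 t ⟨ht.1, htτ⟩, hfirst t ⟨ht.1, htτ⟩]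
    · have hmem : t - τ ∈ Icc 0 T := ⟨by linarith, by linarith [ht.2]⟩
      have hshift : ∀ s ∈ uIoc τ t, H (z₁ (s - τ), w₁ (s - τ))
          = H (_root_.concatAt τ z z₁ s, _root_.concatAt τ w w₁ s) := by
        intro s hs
        rw [uIoc_of_le htτ.le] at hs
        rw [hge s hs.1.le, show _root_.concatAt τ w w₁ s = w₁ (s - τ) from if_neg hs.1.not_ge]
      have hi1 : IntervalIntegrable
          (fun s => H (_root_.concatAt τ z z₁ s, _root_.concatAt τ w w₁ s)) volume 0 τ := by
        refine (hz.intervalIntegrable hH hw hwb ⟨le_rfl, hτ⟩ ⟨hτ, le_rfl⟩).congr fun s hs => ?_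
        rw [uIoc_of_le hτ] at hs
        rw [hle s hs.2, show _root_.concatAt τ w w₁ s = w s from if_pos hs.2]
      have hi2 : IntervalIntegrable
          (fun s => H (_root_.concatAt τ z z₁ s, _root_.concatAt τ w w₁ s)) volume τ t := by
        have := (hz₁.intervalIntegrable hH hw₁ hwb₁ ⟨le_rfl, hT⟩ hmem).comp_sub_right τ
        simp only [zero_add, sub_add_cancel] at this
        exact this.congr hshift
      rw [hge t htτ.le, hz₁.2 _ hmem, hz.2 τ ⟨hτ, le_rfl⟩, hfirst τ ⟨hτ, le_rfl⟩, add_assoc,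
        ← intervalIntegral.integral_add_adjacent_intervals hi1 hi2]
      congr 2
      have h4 := intervalIntegral.integral_comp_sub_right (a := τ) (b := t)
        (fun s => H (z₁ s, w₁ s)) τ
      rw [sub_self] at h4
      rw [← h4]
      exact intervalIntegral.integral_congr_ae (ae_of_all _ hshift)

end Trajectory

/-- Integral form of Grönwall's inequality. -/
theorem le_mul_exp_of_le_add_mul_integral {φ : ℝ → ℝ} {a K T : ℝ} (hK : 0 ≤ K)
    (hφ : ContinuousOn φ (Icc 0 T)) (h : ∀ t ∈ Icc 0 T, φ t ≤ a + K * ∫ s in (0:ℝ)..t, φ s) :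
    ∀ t ∈ Icc 0 T, φ t ≤ a * Real.exp (K * t) := by
  intro t ht
  have hT : 0 ≤ T := ht.1.trans ht.2
  set φ' : ℝ → ℝ := IccExtend hT ((Icc 0 T).domRestrict φ) with hφ'
  have hc : Continuous φ' := (continuousOn_iff_continuous_domRestrict.1 hφ).Icc_extend'
  have heq : ∀ s ∈ Icc 0 T, φ' s = φ s := fun s hs => IccExtend_of_mem hT _ hs
  have hint : ∀ s ∈ Icc 0 T, ∫ r in (0:ℝ)..s, φ r = ∫ r in (0:ℝ)..s, φ' r := by
    intro s hs
    refine intervalIntegral.integral_congr fun r hr => ?_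
    rw [uIcc_of_le hs.1] at hr
    exact (heq r ⟨hr.1, hr.2.trans hs.2⟩).symm
  have hder : ∀ s, HasDerivAt (fun s => a + K * ∫ r in (0:ℝ)..s, φ' r) (K * φ' s) s := fun s =>
    ((intervalIntegral.integral_hasDerivAt_right (hc.intervalIntegrable _ _)
      (hc.stronglyMeasurableAtFilter _ _) hc.continuousAt).const_mul K).const_add a
  have key := le_gronwallBound_of_liminf_deriv_right_le (f := fun s => a + K * ∫ r in (0:ℝ)..s, φ' r)
    (f' := fun s => K * φ' s) (δ := a) (K := K) (ε := 0) (a := 0) (b := T)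
    (fun s _ => (hder s).continuousAt.continuousWithinAt)
    (fun s _ r hr => (hder s).hasDerivWithinAt.liminf_right_slope_le hr)
    (by simp)
    (fun s hs => by
      have hs' : s ∈ Icc 0 T := ⟨hs.1, hs.2.le⟩
      rw [add_zero, ← hint s hs', heq s hs']
      exact mul_le_mul_of_nonneg_left (h s hs') hK) t ht
  rw [gronwallBound_ε0, sub_zero, ← hint t ht] at key
  exact (h t ht).trans key

section Trajectory

variable {E D : Type*} [NormedAddCommGroup E] [NormedSpace ℝ E] [ProperSpace E]
  [NormedAddCommGroup D] [ProperSpace D] [MeasurableSpace D] [BorelSpace D]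
  {H : E × D → E} {w : ℝ → D} {ξ : E} {z : ℝ → E} {T C : ℝ}

theorem LocallyLipschitz.exists_norm_sub_le (hH : LocallyLipschitz H) (R C : ℝ) :
    ∃ K, 0 ≤ K ∧ ∀ x y v, ‖x‖ ≤ R → ‖y‖ ≤ R → ‖v‖ ≤ C → ‖H (x, v) - H (y, v)‖ ≤ K * ‖x - y‖ := by
  obtain ⟨K, hK⟩ := LocallyLipschitzOn.exists_lipschitzOnWith_of_compact
    ((isCompact_closedBall (0:E) R).prod (isCompact_closedBall (0:D) C))
    (hH.locallyLipschitzOn)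
  refine ⟨K, K.2, fun x y v hx hy hv => ?_⟩
  have := hK.norm_sub_le (x := (x, v)) (y := (y, v)) ⟨by simpa using hx, by simpa using hv⟩
    ⟨by simpa using hy, by simpa using hv⟩
  simpa [Prod.norm_def] using this

theorem IsTrajectoryOn.norm_sub_le {ξ' : E} {z' : ℝ → E} {K R : ℝ} (hH : Continuous H)
    (hw : Measurable w) (hwb : ∀ s, ‖w s‖ ≤ C) (hK0 : 0 ≤ K)
    (hK : ∀ x y v, ‖x‖ ≤ R → ‖y‖ ≤ R → ‖v‖ ≤ C → ‖H (x, v) - H (y, v)‖ ≤ K * ‖x - y‖)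
    (hz : IsTrajectoryOn H w ξ z T) (hz' : IsTrajectoryOn H w ξ' z' T)
    (hR : ∀ t ∈ Icc 0 T, ‖z t‖ ≤ R) (hR' : ∀ t ∈ Icc 0 T, ‖z' t‖ ≤ R) :
    ∀ t ∈ Icc 0 T, ‖z t - z' t‖ ≤ ‖ξ - ξ'‖ * Real.exp (K * t) := by
  have hc : ContinuousOn (fun t => ‖z t - z' t‖) (Icc 0 T) := (hz.1.sub hz'.1).norm
  refine le_mul_exp_of_le_add_mul_integral hK0 hc ?_
  intro t ht
  have h0 : (0:ℝ) ∈ Icc 0 T := ⟨le_rfl, ht.1.trans ht.2⟩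
  have hi := hz.intervalIntegrable hH hw hwb h0 ht
  have hi' := hz'.intervalIntegrable hH hw hwb h0 ht
  have h1 : z t - z' t = (ξ - ξ') + ∫ s in (0:ℝ)..t, (H (z s, w s) - H (z' s, w s)) := by
    rw [intervalIntegral.integral_sub hi hi', hz.2 t ht, hz'.2 t ht]; abel
  rw [h1]
  refine (norm_add_le _ _).trans (add_le_add le_rfl ?_)
  rw [← intervalIntegral.integral_const_mul]
  refine intervalIntegral.norm_integral_le_of_norm_le ht.1 (ae_of_all _ fun s hs => ?_) ?_
  · have hs' : s ∈ Icc 0 T := ⟨hs.1.le, hs.2.trans ht.2⟩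
    exact hK _ _ _ (hR s hs') (hR' s hs') (hwb s)
  · refine (ContinuousOn.intervalIntegrable ?_)
    rw [uIcc_of_le ht.1]
    exact continuousOn_const.mul (hc.mono (Icc_subset_Icc_right ht.2))

theorem IsTrajectoryOn.eqOn {z' : ℝ → E} (hH : LocallyLipschitz H)
    (hw : Measurable w) (hwb : ∀ s, ‖w s‖ ≤ C)
    (hz : IsTrajectoryOn H w ξ z T) (hz' : IsTrajectoryOn H w ξ z' T) :
    EqOn z z' (Icc 0 T) := by
  obtain ⟨R, hR⟩ := isCompact_Icc.exists_bound_of_continuousOn hz.1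
  obtain ⟨R', hR'⟩ := isCompact_Icc.exists_bound_of_continuousOn hz'.1
  obtain ⟨K, hK0, hK⟩ := hH.exists_norm_sub_le (max R R') C
  intro t ht
  have := hz.norm_sub_le hH.continuous hw hwb hK0 hK hz'
    (fun t ht => (hR t ht).trans (le_max_left _ _))
    (fun t ht => (hR' t ht).trans (le_max_right _ _)) t ht
  rw [sub_self, norm_zero, zero_mul] at this
  exact sub_eq_zero.1 (norm_le_zero_iff.1 this)

/-- Global existence for a globally Lipschitz field. -/
theorem exists_isTrajectoryOn_of_lipschitz {K : ℝ} (hH : Continuous H)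
    (hK : ∀ x y v, ‖H (x, v) - H (y, v)‖ ≤ K * ‖x - y‖)
    (hw : Measurable w) (hwb : ∀ s, ‖w s‖ ≤ C) (ξ : E) :
    ∃ z, ∀ T, IsTrajectoryOn H w ξ z T := by
  wlog hK1 : 1 ≤ K generalizing K
  · exact this (K := max K 1) (fun x y v => (hK x y v).trans (by gcongr; exact le_max_left _ _))
      (le_max_right _ _)
  obtain ⟨M, hM0, hM⟩ := hH.exists_norm_le_of_norm_le ‖ξ‖ C
  have hint : ∀ z : ℝ → E, Continuous z → ∀ a b,
      IntervalIntegrable (fun s => H (z s, w s)) volume a b := by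
    intro z hz a b
    obtain ⟨R, hR⟩ := (isCompact_uIcc (a := a) (b := b)).exists_bound_of_continuousOn hz.continuousOn
    exact (integrableOn_field hH hw hwb measurableSet_uIcc (by simp [uIcc]) hz.continuousOn
      hR).intervalIntegrable
  let Φ : (ℝ → E) → ℝ → E := fun z t => ξ + ∫ s in (0:ℝ)..t, H (z s, w s)
  let Z : ℕ → ℝ → E := fun k => Φ^[k] fun _ => ξ
  have hZs : ∀ k t, Z (k + 1) t = ξ + ∫ s in (0:ℝ)..t, H (Z k s, w s) := fun k t => by
    simp only [Z, Function.iterate_succ_apply']; rfl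
  have hZc : ∀ k, Continuous (Z k) := by
    intro k
    induction k with
    | zero => exact continuous_const
    | succ k ih =>
      rw [show Z (k + 1) = fun t => ξ + ∫ s in (0:ℝ)..t, H (Z k s, w s) from funext (hZs k)]
      exact continuous_const.add (intervalIntegral.continuous_primitive (hint _ ih) 0)
  have hgeo : ∀ k t, 0 ≤ t → dist (Z k t) (Z (k + 1) t)
      ≤ M * Real.exp (2 * K * t) * (1 / 2) ^ k := by
    intro k
    induction k with
    | zero =>
      intro t ht
      rw [dist_comm, dist_eq_norm, hZs, show Z 0 = fun _ => ξ from rfl, add_sub_cancel_left]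
      refine (intervalIntegral.norm_integral_le_of_norm_le_const (C := M)
        fun s _ => hM _ _ le_rfl (hwb s)).trans ?_
      rw [sub_zero, abs_of_nonneg ht, pow_zero, mul_one]
      have := Real.add_one_le_exp (2 * K * t)
      gcongr
      nlinarith
    | succ k ih =>
      intro t ht
      rw [dist_eq_norm, hZs, hZs, add_sub_add_left_eq_sub,
        ← intervalIntegral.integral_sub (hint _ (hZc _) _ _) (hint _ (hZc _) _ _)]
      have hd : ∀ s, HasDerivAt (fun s => M * Real.exp (2 * K * s) * (1 / 2) ^ (k + 1))
          (K * (M * Real.exp (2 * K * s) * (1 / 2) ^ k)) s := fun s => by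
        have h1 : HasDerivAt (fun s => Real.exp (2 * K * s)) (Real.exp (2 * K * s) * (2 * K)) s := by
          have := (hasDerivAt_id s).const_mul (2 * K)
          rw [mul_one] at this
          exact this.exp
        refine ((h1.const_mul M).mul_const ((1 / 2) ^ (k + 1))).congr_deriv ?_
        rw [pow_succ]; ring
      refine (intervalIntegral.norm_integral_le_of_norm_le (g := fun s =>
        K * (M * Real.exp (2 * K * s) * (1 / 2) ^ k)) ht (ae_of_all _ fun s hs => ?_)
        (Continuous.intervalIntegrable (by fun_prop) _ _)).trans ?_
      · refine (hK _ _ _).trans ?_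
        rw [← dist_eq_norm]
        gcongr
        exact ih s hs.1.le
      · rw [intervalIntegral.integral_eq_sub_of_hasDerivAt (fun s _ => hd s)
          (Continuous.intervalIntegrable (by fun_prop) _ _)]
        rw [sub_le_self_iff]
        positivity
  have hlim : ∀ t, ∃ l, 0 ≤ t → Tendsto (fun k => Z k t) atTop (𝓝 l) := by
    intro t
    by_cases ht : 0 ≤ t
    · obtain ⟨l, hl⟩ := cauchySeq_tendsto_of_complete
        (cauchySeq_of_le_geometric _ _ (by norm_num) fun k => hgeo k t ht)
      exact ⟨l, fun _ => hl⟩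
    · exact ⟨0, fun h => absurd h ht⟩
  choose z hz using hlim
  have hrate : ∀ k t, 0 ≤ t → dist (Z k t) (z t) ≤ 2 * M * Real.exp (2 * K * t) * (1 / 2) ^ k := by
    intro k t ht
    refine (dist_le_of_le_geometric_of_tendsto _ _ (by norm_num) (fun k => hgeo k t ht) (hz t ht)
      k).trans_eq ?_
    ring
  have hunif : ∀ T, ∀ k, ∀ t ∈ Icc 0 T, dist (Z k t) (z t)
      ≤ 2 * M * Real.exp (2 * K * T) * (1 / 2) ^ k := by
    intro T k t ht
    refine (hrate k t ht.1).trans ?_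
    gcongr
    exact ht.2
  have hzero : ∀ c : ℝ, Tendsto (fun k : ℕ => c * (1 / 2 : ℝ) ^ k) atTop (𝓝 0) := fun c => by
    simpa using (tendsto_pow_atTop_nhds_zero_of_lt_one (by norm_num : (0:ℝ) ≤ 1 / 2)
      (by norm_num)).const_mul c
  have hcont : ∀ T, ContinuousOn z (Icc 0 T) := by
    intro T
    have : TendstoUniformlyOn Z z atTop (Icc 0 T) := by
      rw [Metric.tendstoUniformlyOn_iff]
      intro ε hε
      filter_upwards [(hzero _).eventually_lt_const hε] with k hk t ht
      rw [dist_comm]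
      exact (hunif T k t ht).trans_lt hk
    exact this.continuousOn (Frequently.of_forall fun k => (hZc k).continuousOn)
  refine ⟨z, fun T => ⟨hcont T, fun t ht => ?_⟩⟩
  have h1 : Tendsto (fun k => Z (k + 1) t) atTop (𝓝 (z t)) :=
    (hz t ht.1).comp (tendsto_add_atTop_nat 1)
  refine tendsto_nhds_unique h1 ?_
  simp only [hZs]
  refine tendsto_const_nhds.add ?_
  obtain ⟨R, hR⟩ := isCompact_Icc.exists_bound_of_continuousOn (hcont t)
  have hiz : IntervalIntegrable (fun s => H (z s, w s)) volume 0 t := by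
    refine IntegrableOn.intervalIntegrable ?_
    rw [uIcc_of_le ht.1]
    exact integrableOn_field hH hw hwb measurableSet_Icc (by simp) (hcont t) hR
  rw [tendsto_iff_dist_tendsto_zero]
  refine squeeze_zero (fun _ => dist_nonneg) (fun k => ?_)
    (hzero (K * (2 * M * Real.exp (2 * K * t)) * |t - 0|))
  rw [dist_eq_norm, ← intervalIntegral.integral_sub (hint _ (hZc _) _ _) hiz]
  refine (intervalIntegral.norm_integral_le_of_norm_le_const fun s hs => ?_).trans_eq
    (mul_right_comm (K * (2 * M * Real.exp (2 * K * t))) ((1 / 2) ^ k) |t - 0|)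
  rw [uIoc_of_le ht.1] at hs
  refine (hK _ _ _).trans ?_
  rw [← dist_eq_norm, mul_assoc]
  gcongr
  exact hunif t k s ⟨hs.1.le, hs.2⟩

/-- Global existence under an a priori bound. -/
theorem exists_isTrajectoryOn [FiniteDimensional ℝ E] (hH : LocallyLipschitz H)
    (hw : Measurable w) (hwb : ∀ s, ‖w s‖ ≤ C) {R : ℝ}
    (hR : ∀ z T, 0 ≤ T → IsTrajectoryOn H w ξ z T → ∀ t ∈ Icc 0 T, ‖z t‖ ≤ R) :
    ∃ z, ∀ T, IsTrajectoryOn H w ξ z T := by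
  obtain ⟨K, hK⟩ := LocallyLipschitzOn.exists_lipschitzOnWith_of_compact
    ((isCompact_closedBall (0:E) (R + 1)).prod (isCompact_closedBall (0:D) C))
    (hH.locallyLipschitzOn)
  obtain ⟨G, hG, hGH⟩ := hK.extend_finite_dimension
  obtain ⟨z, hz⟩ := exists_isTrajectoryOn_of_lipschitz (ξ := ξ) hG.continuous
    (fun x y v => by
      have := hG.norm_sub_le (x, v) (y, v)
      simpa [Prod.norm_def] using this) hw hwb
  have hcongr : ∀ T, (∀ t ∈ Icc 0 T, ‖z t‖ ≤ R + 1) → IsTrajectoryOn H w ξ z T := fun T hT =>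
    (hz T).congr fun s hs => (hGH ⟨by simpa using hT s hs, by simpa using hwb s⟩).symm
  suffices hb : ∀ T, 0 ≤ T → ‖z T‖ < R + 1 from
    ⟨z, fun T => hcongr T fun t ht => (hb t ht.1).le⟩
  by_contra! hbad
  obtain ⟨T, hT0, hT⟩ := hbad
  set S : Set ℝ := Icc 0 T ∩ {t | R + 1 ≤ ‖z t‖} with hS
  have hSc : IsCompact S := by
    have : IsClosed S := (hz T).1.norm.preimage_isClosed_of_isClosed isClosed_Icc isClosed_Ici
    exact isCompact_Icc.of_isClosed_subset this inter_subset_left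
  obtain ⟨τ, hτ, hmin⟩ := hSc.exists_isLeast ⟨T, ⟨hT0, le_rfl⟩, hT⟩
  have hlt : ∀ t ∈ Ico 0 τ, ‖z t‖ < R + 1 := by
    intro t ht
    by_contra! hge
    exact (hmin ⟨⟨ht.1, ht.2.le.trans hτ.1.2⟩, hge⟩).not_gt ht.2
  have hR0 : ‖ξ‖ ≤ R := by
    have h0 : z 0 = ξ := (hz 0).apply_zero le_rfl
    have := hR (fun _ => ξ) 0 le_rfl ⟨continuousOn_const, fun t ht => by
      have : t = 0 := le_antisymm ht.2 ht.1
      simp [this]⟩ 0 ⟨le_rfl, le_rfl⟩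
    exact this
  have hle : ∀ t ∈ Icc 0 τ, ‖z t‖ ≤ R + 1 := by
    rcases eq_or_lt_of_le hτ.1.1 with h0 | h0
    · intro t ht
      have : t = 0 := le_antisymm (ht.2.trans h0.symm.le) ht.1
      rw [this, (hz 0).apply_zero le_rfl]
      linarith
    · have hcl : closure (Ico 0 τ) = Icc 0 τ := closure_Ico h0.ne
      have hc : ContinuousOn (fun t => ‖z t‖) (closure (Ico 0 τ)) := by
        rw [hcl]; exact (hz τ).1.norm
      intro t ht
      rw [← hcl] at ht
      exact le_on_closure (fun s hs => (hlt s hs).le) hc continuousOn_const ht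
  have := hR z τ hτ.1.1 (hcongr τ hle) τ ⟨hτ.1.1, le_rfl⟩
  have := hτ.2
  rw [mem_ofPred_eq] at this
  linarith

end Trajectory

theorem LocallyLipschitz.comp_prodMk_smul {E F U X : Type*} [NormedAddCommGroup E]
    [NormedAddCommGroup U] [NormedSpace ℝ U] [NormedAddCommGroup F] [NormedAddCommGroup X]
    {f : E → U → X} {h : E → F} {lam : ℝ → ℝ} (hf : LocallyLipschitz fun
    q : E × U => f q.1 q.2) (hh : LocallyLipschitz h)
    (hl : ∀ s t, 0 ≤ s → 0 ≤ t → |lam s - lam t| ≤ 2 * |s - t|) :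
    LocallyLipschitz fun q : E × U => f q.1 (lam ‖h q.1‖ • q.2) := by
  have hl' : LipschitzWith 2 fun y : F => lam ‖y‖ := by
    refine LipschitzWith.of_dist_le_mul fun a b => ?_
    rw [Real.dist_eq]
    refine (hl _ _ (norm_nonneg _) (norm_nonneg _)).trans ?_
    rw [dist_eq_norm]
    have := abs_norm_sub_norm_le a b
    rw [show ((2:ℝ≥0):ℝ) = 2 from rfl]
    linarith
  have h1 : LocallyLipschitz fun q : E × U => lam ‖h q.1‖ :=
    hl'.locallyLipschitz.comp (hh.comp LipschitzWith.prod_fst.locallyLipschitz)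
  have h2 : LocallyLipschitz fun q : ℝ × U => q.1 • q.2 := by
    have : ContDiff ℝ 1 fun q : ℝ × U => q.1 • q.2 :=
      contDiff_fst.smul contDiff_snd
    exact this.locallyLipschitz
  have h3 : LocallyLipschitz fun q : E × U =>
      (lam ‖h q.1‖, q.2) := h1.prodMk LipschitzWith.prod_snd.locallyLipschitz
  have h4 : LocallyLipschitz fun q : E × U =>
      (q.1, lam ‖h q.1‖ • q.2) := LipschitzWith.prod_fst.locallyLipschitz.prodMk (h2.comp h3)
  exact hf.comp h4

section System

variable {n m p : ℕ}
  {f : EuclideanSpace ℝ (Fin n) → EuclideanSpace ℝ (Fin m) → EuclideanSpace ℝ (Fin n)}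
  {h : EuclideanSpace ℝ (Fin n) → EuclideanSpace ℝ (Fin p)}
  {x : ℝ → EuclideanSpace ℝ (Fin n) → (ℝ → EuclideanSpace ℝ (Fin m)) → EuclideanSpace ℝ (Fin n)}

theorem isInput_of_norm_le {u : ℝ → EuclideanSpace ℝ (Fin m)} {C : ℝ} (hu : Measurable u)
    (hC : ∀ s, ‖u s‖ ≤ C) : IsInput u :=
  ⟨hu, fun _ _ => ⟨C, ae_of_all _ hC⟩⟩

theorem uNormE_le_of_norm_le {u : ℝ → EuclideanSpace ℝ (Fin m)} {C : ℝ}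
    (hC : ∀ s, ‖u s‖ ≤ C) : uNormE u ≤ ENNReal.ofReal C := by
  refine essSup_le_of_ae_le _ (ae_of_all _ fun s => ?_)
  change ‖u s‖ₑ ≤ ENNReal.ofReal C
  rw [← ofReal_norm]
  exact ENNReal.ofReal_le_ofReal (hC s)

/-- For a BIBS system, every trajectory driven by a bounded measurable input obeys the BIBS
estimate. -/
theorem IsBIBS.exists_norm_le (hB : IsBIBS f x)
    (hf : LocallyLipschitz fun q : EuclideanSpace ℝ (Fin n) × EuclideanSpace ℝ (Fin m) =>
      f q.1 q.2) :
    ∃ σ, IsClassK σ ∧ ∀ u C ξ z T, Measurable u → 0 ≤ C → (∀ s, ‖u s‖ ≤ C) →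
      IsTrajectoryOn (fun q => f q.1 q.2) u ξ z T →
      ∀ t ∈ Icc 0 T, ‖z t‖ ≤ max (σ ‖ξ‖) (σ C) := by
  obtain ⟨hx, σ, hσ, hb⟩ := hB
  refine ⟨σ, hσ, fun u C ξ z T hu hC huC hz t ht => ?_⟩
  have hin := isInput_of_norm_le hu huC
  have hE := uNormE_le_of_norm_le huC
  have hbdd : BddInput u := ne_top_of_le_ne_top ENNReal.ofReal_ne_top hE
  have hxt : IsTrajectoryOn (fun q => f q.1 q.2) u ξ (fun t => x t ξ u) T :=
    isTrajectoryOn_of_forall_eq hf.continuous hu huC (hx ξ u hin)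
      (fun T _ _ t ht => hb ξ u hin hbdd t ht.1) (ht.1.trans ht.2)
  rw [hz.eqOn hf hu huC hxt ht]
  refine (hb ξ u hin hbdd t ht.1).trans (max_le_max le_rfl ?_)
  exact hσ.le_of_le ENNReal.toReal_nonneg (ENNReal.toReal_le_of_le_ofReal hC hE)

variable (f h) in
/-- The closed-loop vector field `(x, d) ↦ f(x, λ(|h(x)|) d)`. -/
def closedLoop (lam : ℝ → ℝ) (q : EuclideanSpace ℝ (Fin n) × EuclideanSpace ℝ (Fin m)) :
    EuclideanSpace ℝ (Fin n) :=
  f q.1 (lam ‖h q.1‖ • q.2)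

theorem IsClassK.continuous_comp_norm {X F : Type*} [TopologicalSpace X]
    [SeminormedAddCommGroup F] {lam : ℝ → ℝ} (hl : IsClassK lam) {g : X → F} (hg : Continuous g) :
    Continuous fun a => lam ‖g a‖ :=
  hl.1.comp_continuous hg.norm fun _ => norm_nonneg _

theorem continuous_closedLoop {lam : ℝ → ℝ} (hf : Continuous fun
    q : EuclideanSpace ℝ (Fin n) × EuclideanSpace ℝ (Fin m) => f q.1 q.2) (hh : Continuous h)
    (hl : IsClassK lam) : Continuous (closedLoop f h lam) := by
  have h1 := hl.continuous_comp_norm (hh.comp (continuous_fst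
    (X := EuclideanSpace ℝ (Fin n)) (Y := EuclideanSpace ℝ (Fin m))))
  exact hf.comp (continuous_fst.prodMk (h1.smul continuous_snd))

theorem locallyLipschitz_closedLoop {lam : ℝ → ℝ} (hf : LocallyLipschitz fun
    q : EuclideanSpace ℝ (Fin n) × EuclideanSpace ℝ (Fin m) => f q.1 q.2) (hh : LocallyLipschitz h)
    (hl : ∀ s t, 0 ≤ s → 0 ≤ t → |lam s - lam t| ≤ 2 * |s - t|) :
    LocallyLipschitz (closedLoop f h lam) :=
  hf.comp_prodMk_smul hh hl

/-- Replacing the closed-loop feedback by an open-loop input. -/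
theorem IsTrajectoryOn.norm_le_of_closedLoop {σ : ℝ → ℝ}
    (hσ : ∀ u C ξ z T, Measurable u → 0 ≤ C → (∀ s, ‖u s‖ ≤ C) →
      IsTrajectoryOn (fun q => f q.1 q.2) u ξ z T →
      ∀ t ∈ Icc 0 T, ‖z t‖ ≤ max (σ ‖ξ‖) (σ C))
    (hh : Continuous h) {lam : ℝ → ℝ} (hl : IsClassK lam) {d : ℝ → EuclideanSpace ℝ (Fin m)}
    (hd : Measurable d) (hd1 : ∀ s, ‖d s‖ ≤ 1) {ξ : EuclideanSpace ℝ (Fin n)}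
    {z : ℝ → EuclideanSpace ℝ (Fin n)} {T : ℝ} (hz : IsTrajectoryOn (closedLoop f h lam) d ξ z T)
    {B : ℝ} (hB : ∀ t ∈ Icc 0 T, ‖h (z t)‖ ≤ B) :
    ∀ t ∈ Icc 0 T, ‖z t‖ ≤ max (σ ‖ξ‖) (σ (lam B)) := by
  intro t ht
  have hT : 0 ≤ T := ht.1.trans ht.2
  have hB0 : 0 ≤ B := (norm_nonneg _).trans (hB t ht)
  set z' : ℝ → EuclideanSpace ℝ (Fin n) := IccExtend hT ((Icc 0 T).domRestrict z) with hz'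
  have hc : Continuous z' := (continuousOn_iff_continuous_domRestrict.1 hz.1).Icc_extend'
  have heq : ∀ s ∈ Icc 0 T, z' s = z s := fun s hs => IccExtend_of_mem hT _ hs
  have hm : ∀ s, ‖h (z' s)‖ ≤ B := fun s => hB _ (projIcc 0 T hT s).2
  refine hσ (fun s => lam ‖h (z' s)‖ • d s) (lam B) ξ z T ?_ (hl.nonneg hB0) ?_ ?_ t ht
  · exact (hl.continuous_comp_norm (hh.comp hc)).measurable.smul hd
  · intro s
    rw [norm_smul, Real.norm_of_nonneg (hl.nonneg (norm_nonneg _))]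
    calc lam ‖h (z' s)‖ * ‖d s‖ ≤ lam B * 1 := by
          gcongr
          · exact hl.nonneg hB0
          · exact hl.le_of_le (norm_nonneg _) (hm s)
          · exact hd1 s
      _ = lam B := mul_one _
  · exact hz.congr fun s hs => by simp only [closedLoop, heq s hs]

theorem isDisturbance_of_norm_le {d : ℝ → EuclideanSpace ℝ (Fin m)} (hd : Measurable d)
    (hd1 : ∀ s, ‖d s‖ ≤ 1) : IsDisturbance d :=
  ⟨hd, ae_of_all _ hd1⟩

theorem IsDisturbance.exists_norm_le {d : ℝ → EuclideanSpace ℝ (Fin m)} (hd : IsDisturbance d)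
    (f : EuclideanSpace ℝ (Fin n) → EuclideanSpace ℝ (Fin m) → EuclideanSpace ℝ (Fin n))
    (h : EuclideanSpace ℝ (Fin n) → EuclideanSpace ℝ (Fin p)) (lam : ℝ → ℝ) :
    ∃ d', Measurable d' ∧ (∀ s, ‖d' s‖ ≤ 1) ∧ ∀ ξ z,
      SolvesClosedLoop f h lam ξ d z ↔ SolvesClosedLoop f h lam ξ d' z := by
  refine ⟨fun s => if ‖d s‖ ≤ 1 then d s else 0, ?_, ?_, fun ξ z => ?_⟩
  · exact Measurable.ite (measurableSet_le hd.1.norm measurable_const) hd.1 measurable_const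
  · intro s
    dsimp only
    split_ifs with hs
    · exact hs
    · simp
  · refine forall₂_congr fun t ht => ?_
    have : ∫ s in (0:ℝ)..t, f (z s) (lam ‖h (z s)‖ • d s)
        = ∫ s in (0:ℝ)..t, f (z s) (lam ‖h (z s)‖ • if ‖d s‖ ≤ 1 then d s else 0) := by
      refine intervalIntegral.integral_congr_ae ?_
      have h1 := (ae_restrict_iff' measurableSet_Ici).1 hd.2
      filter_upwards [h1] with s hs hst
      rw [uIoc_of_le ht] at hst
      rw [if_pos (hs hst.1.le)]
    rw [this]

end System

section Lyapunov

variable {E D : Type*} [NormedAddCommGroup E] [NormedSpace ℝ E] [ProperSpace E]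
  [NormedAddCommGroup D] [ProperSpace D] [MeasurableSpace D] [BorelSpace D]
  {H : E × D → E} {w : ℝ → D} {ξ : E} {z : ℝ → E} {T C : ℝ}

/-- A bound on the derivative of `V` along the vector field integrates to a bound along
trajectories. -/
theorem IsTrajectoryOn.lyapunov_le (hH : LocallyLipschitz H) (hw : Measurable w)
    (hwb : ∀ s, ‖w s‖ ≤ C) (hz : IsTrajectoryOn H w ξ z T) {V : E → ℝ} (hV : Differentiable ℝ V)
    {a b c : ℝ} (ha : 0 ≤ a) (hbT : b ≤ T)
    (hc : ∀ t ∈ Ico a b, ∀ v, ‖v‖ ≤ C → fderiv ℝ V (z t) (H (z t, v)) ≤ -c) :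
    ∀ t ∈ Icc a b, V (z t) ≤ V (z a) - c * (t - a) := by
  have hsub : Icc a b ⊆ Icc 0 T := Icc_subset_Icc ha hbT
  have hcont : ContinuousOn (fun t => V (z t)) (Icc a b) :=
    hV.continuous.comp_continuousOn (hz.1.mono hsub)
  obtain ⟨R, hR⟩ := isCompact_Icc.exists_bound_of_continuousOn hz.1
  obtain ⟨M, hM0, hM⟩ := hH.continuous.exists_norm_le_of_norm_le R C
  obtain ⟨K, hK0, hK⟩ := hH.exists_norm_sub_le R C
  have hspeed : ∀ t ∈ Icc 0 T, ∀ s ∈ Icc 0 T, t ≤ s → ‖z s - z t‖ ≤ M * (s - t) := by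
    intro t ht s hs hts
    rw [hz.sub_eq hH.continuous hw hwb ht hs]
    refine (intervalIntegral.norm_integral_le_of_norm_le_const fun r hr => ?_).trans_eq
      (by rw [abs_of_nonneg (sub_nonneg.2 hts)])
    rw [uIoc_of_le hts] at hr
    exact hM _ _ (hR r ⟨ht.1.trans hr.1.le, hr.2.trans hs.2⟩) (hwb r)
  refine image_le_of_liminf_slope_right_le_deriv_boundary hcont (B := fun t => V (z a) - c * (t - a))
    (B' := fun _ => -c) (by simp) (by fun_prop) (fun t _ => ?_) ?_
  · have : HasDerivAt (fun t => V (z a) - c * (t - a)) (-(c * 1)) t :=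
      (((hasDerivAt_id t).sub_const a).const_mul c).const_sub _
    rw [mul_one] at this
    exact this.hasDerivWithinAt
  intro t ht r hr
  refine Eventually.frequently ?_
  have htT : t ∈ Icc 0 T := hsub ⟨ht.1, ht.2.le⟩
  set L := fderiv ℝ V (z t) with hL
  have hgap : 0 < r + c := by linarith
  have hlittle := (hV (z t)).hasFDerivAt.isLittleO
  have hη : 0 < (r + c) / (2 * (M + 1)) := by positivity
  have hev := hlittle.bound hη
  have hzt : Tendsto z (𝓝[>] t) (𝓝 (z t)) := by
    have h1 : ContinuousWithinAt z (Icc 0 T) t := hz.1 t htT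
    refine h1.tendsto.mono_left ?_
    refine nhdsWithin_le_of_mem ?_
    filter_upwards [self_mem_nhdsWithin,
      mem_nhdsWithin_of_mem_nhds (gt_mem_nhds (ht.2.trans_le hbT))] with s hs hsT
    exact ⟨htT.1.trans (le_of_lt hs), hsT.le⟩
  have hsmall : ∀ᶠ s in 𝓝[>] t, ‖L‖ * K * M * (s - t) < (r + c) / 2 := by
    have : Tendsto (fun s => ‖L‖ * K * M * (s - t)) (𝓝[>] t) (𝓝 (‖L‖ * K * M * (t - t))) :=
      ((by fun_prop : Continuous fun s => ‖L‖ * K * M * (s - t)).tendsto t).mono_left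
        nhdsWithin_le_nhds
    rw [sub_self, mul_zero] at this
    exact this.eventually_lt_const (by positivity)
  filter_upwards [self_mem_nhdsWithin, mem_nhdsWithin_of_mem_nhds (gt_mem_nhds ht.2), hsmall,
    hzt.eventually hev] with s hts hsb hs1 hs2
  have hts : t < s := hts
  have hsT : s ∈ Icc 0 T := ⟨htT.1.trans hts.le, (hsb.le).trans hbT⟩
  have hpos : 0 < s - t := sub_pos.2 hts
  have hint := hz.intervalIntegrable hH.continuous hw hwb htT hsT
  have hlin : L (z s - z t) ≤ (-c + ‖L‖ * K * M * (s - t)) * (s - t) := by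
    rw [hz.sub_eq hH.continuous hw hwb htT hsT, ← L.intervalIntegral_comp_comm hint]
    have h3 : ∫ r in t..s, (-c + ‖L‖ * K * M * (s - t)) = (-c + ‖L‖ * K * M * (s - t)) * (s - t) := by
      rw [intervalIntegral.integral_const, smul_eq_mul, mul_comm]
    rw [← h3]
    refine intervalIntegral.integral_mono_on hts.le ⟨L.integrable_comp hint.1, L.integrable_comp hint.2⟩ (by simp) ?_
    intro r hr
    have hrT : r ∈ Icc 0 T := ⟨htT.1.trans hr.1, hr.2.trans hsT.2⟩
    have h4 := hc t ht (w r) (hwb r)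
    have h5 : L (H (z r, w r)) - L (H (z t, w r)) ≤ ‖L‖ * K * M * (s - t) := by
      rw [← map_sub]
      refine (le_abs_self _).trans ((L.le_opNorm _).trans ?_)
      rw [mul_assoc, mul_assoc]
      refine mul_le_mul_of_nonneg_left ?_ (norm_nonneg _)
      refine (hK _ _ _ (hR r hrT) (hR t htT) (hwb r)).trans ?_
      refine mul_le_mul_of_nonneg_left ((hspeed t htT r hrT hr.1).trans ?_) hK0
      exact mul_le_mul_of_nonneg_left (by linarith [hr.2]) hM0
    linarith
  have hrem : V (z s) - V (z t) - L (z s - z t) ≤ (r + c) / 2 * (s - t) * (M / (M + 1)) := by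
    refine (le_abs_self _).trans (hs2.trans ?_)
    refine (mul_le_mul_of_nonneg_left (hspeed t htT s hsT hts.le) hη.le).trans_eq ?_
    field_simp
  have hfrac : M / (M + 1) < 1 := by rw [div_lt_one (by positivity)]; linarith
  have : (r + c) / 2 * (s - t) * (M / (M + 1)) < (r + c) / 2 * (s - t) :=
    mul_lt_of_lt_one_right (by positivity) hfrac
  have h6 : ‖L‖ * K * M * (s - t) * (s - t) < (r + c) / 2 * (s - t) :=
    mul_lt_mul_of_pos_right hs1 hpos
  rw [slope_def_field, div_lt_iff₀ hpos]
  nlinarith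

end Lyapunov

section System

variable {n m p : ℕ}
  {f : EuclideanSpace ℝ (Fin n) → EuclideanSpace ℝ (Fin m) → EuclideanSpace ℝ (Fin n)}
  {h : EuclideanSpace ℝ (Fin n) → EuclideanSpace ℝ (Fin p)}
  {x : ℝ → EuclideanSpace ℝ (Fin n) → (ℝ → EuclideanSpace ℝ (Fin m)) → EuclideanSpace ℝ (Fin n)}

/-- Every class-`K` function `χ` admits a smooth Lipschitz class-`K∞` function `λ` with
`χ ∘ λ ≤ id`. -/
theorem IsClassK.exists_smooth_gain {χ : ℝ → ℝ} (hχ : IsClassK χ) :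
    ∃ l, IsClassKInfty l ∧ ContDiffOn ℝ (⊤:ℕ∞) l (Ioi 0) ∧
      (∀ s t, 0 ≤ s → 0 ≤ t → |l s - l t| ≤ 2 * |s - t|) ∧
      ∀ s r, 0 ≤ s → 0 ≤ r → r ≤ l s → χ r ≤ s := by
  have hκ : IsClassKInfty fun s => χ s + s := by
    refine ⟨⟨hχ.1.add continuousOn_id, fun a ha b hb hab => add_lt_add (hχ.2.1 ha hb hab) hab, ?_⟩,
      ?_⟩
    · simp [hχ.2.2]
    · refine tendsto_atTop_mono' _ ?_ tendsto_id
      filter_upwards [eventually_ge_atTop 0] with s hs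
      have := hχ.nonneg hs
      simp only [id]
      linarith
  obtain ⟨γ, hγ, -, hκγ⟩ := hκ.exists_inverse
  obtain ⟨l, hl, hls, hlL, hlγ⟩ := exists_smooth_classKInfty_le (a := γ) hγ.1.2.1.monotoneOn
    hγ.1.2.2 (fun s hs => hγ.1.pos hs) hγ.2
  refine ⟨l, hl, hls, hlL, fun s r hs hr hrl => ?_⟩
  have h1 := hκ.1.le_of_le hr (hrl.trans (hlγ s hs))
  simp only [hκγ s hs] at h1
  linarith

theorem IsROSLyapunov.isROS {V : EuclideanSpace ℝ (Fin n) → ℝ} (hV : IsROSLyapunov f h V)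
    (hf : LocallyLipschitz fun q : EuclideanSpace ℝ (Fin n) × EuclideanSpace ℝ (Fin m) =>
      f q.1 q.2) (hh : LocallyLipschitz h) (hB : IsBIBS f x) : IsROS f h := by
  obtain ⟨hVs, hV0, ⟨α₁, α₂, hα₁, hα₂, hα⟩, χ, hχ, α₃, hα₃, hα₃a, hdec⟩ := hV
  obtain ⟨σ, hσ, hbibs⟩ := hB.exists_norm_le hf
  obtain ⟨l, hl, hls, hlL, hlχ⟩ := hχ.exists_smooth_gain
  obtain ⟨γ, hγ, hγα, hαγ⟩ := hα₁.exists_inverse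
  have hH := locallyLipschitz_closedLoop hf hh hlL
  have hVd : Differentiable ℝ V := hVs.differentiable (by simp)
  have hdec' : ∀ ξ v, ‖v‖ ≤ 1 →
      fderiv ℝ V ξ (closedLoop f h l (ξ, v)) ≤ -α₃ (V ξ) ‖ξ‖ := by
    intro ξ v hv
    refine hdec _ _ (hlχ _ _ (norm_nonneg _) (norm_nonneg _) ?_)
    rw [norm_smul, Real.norm_of_nonneg (hl.1.nonneg (norm_nonneg _))]
    exact mul_le_of_le_one_right (hl.1.nonneg (norm_nonneg _)) hv
  set b : ℝ → ℝ := fun s => γ (α₂ s) with hb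
  have hb0 : b 0 = 0 := by simp only [hb, hα₂.1.2.2, hγ.1.2.2]
  have hbmono : ∀ r s, 0 ≤ r → r ≤ s → b r ≤ b s := fun r s hr hrs =>
    hγ.1.le_of_le (hα₂.1.nonneg hr) (hα₂.1.le_of_le hr hrs)
  have hbnn : ∀ s, 0 ≤ s → 0 ≤ b s := fun s hs => hγ.1.nonneg (hα₂.1.nonneg hs)
  set ρ : ℝ → ℝ := fun s => max (σ s) (σ (l (b s))) with hρ
  have hρmono : ∀ r s, 0 ≤ r → r ≤ s → ρ r ≤ ρ s := fun r s hr hrs =>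
    max_le_max (hσ.le_of_le hr hrs) (hσ.le_of_le (hl.1.nonneg (hbnn r hr))
      (hl.1.le_of_le (hbnn r hr) (hbmono r s hr hrs)))
  have hVmono : ∀ ξ d z T, Measurable d → (∀ s, ‖d s‖ ≤ 1) →
      IsTrajectoryOn (closedLoop f h l) d ξ z T → ∀ a ∈ Icc 0 T, ∀ t ∈ Icc a T,
      V (z t) ≤ V (z a) := by
    intro ξ d z T hd hd1 hz a ha t ht
    have := hz.lyapunov_le hH hd hd1 hVd (a := a) (b := T) (c := 0) ha.1 le_rfl
      (fun s _ v hv => (hdec' _ v hv).trans (neg_le_neg ((hα₃ _ (norm_nonneg _)).nonneg (hV0 _))))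
      t ht
    simpa using this
  have hout : ∀ ξ d z T, Measurable d → (∀ s, ‖d s‖ ≤ 1) →
      IsTrajectoryOn (closedLoop f h l) d ξ z T → ∀ t ∈ Icc 0 T, ‖h (z t)‖ ≤ b ‖ξ‖ := by
    intro ξ d z T hd hd1 hz t ht
    have h0 : 0 ≤ T := ht.1.trans ht.2
    have h1 := hVmono ξ d z T hd hd1 hz 0 ⟨le_rfl, h0⟩ t ht
    rw [hz.apply_zero h0] at h1
    have h2 : α₁ ‖h (z t)‖ ≤ α₂ ‖ξ‖ := (hα _).1.trans (h1.trans (hα _).2)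
    have h3 := hγ.1.le_of_le (hα₁.1.nonneg (norm_nonneg _)) h2
    rwa [hγα _ (norm_nonneg _)] at h3
  have hstate : ∀ ξ d z T, Measurable d → (∀ s, ‖d s‖ ≤ 1) →
      IsTrajectoryOn (closedLoop f h l) d ξ z T → ∀ t ∈ Icc 0 T, ‖z t‖ ≤ ρ ‖ξ‖ :=
    fun ξ d z T hd hd1 hz =>
      hz.norm_le_of_closedLoop hbibs hh.continuous hl.1 hd hd1 (hout ξ d z T hd hd1 hz)
  have hattr : ∀ r ε, 0 ≤ r → 0 < ε → ∃ τ, ∀ ξ d z T, ‖ξ‖ ≤ r → Measurable d → (∀ s, ‖d s‖ ≤ 1) →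
      0 ≤ T → IsTrajectoryOn (closedLoop f h l) d ξ z T → τ < T → ‖h (z T)‖ ≤ ε := by
    intro r ε hr hε
    have hδ : 0 < α₁ ε := hα₁.1.pos hε
    have hρr : 0 ≤ ρ r := (hσ.nonneg hr).trans (le_max_left _ _)
    have ha3 : 0 < α₃ (α₁ ε) (ρ r) := (hα₃ _ hρr).pos hδ
    refine ⟨α₂ r / α₃ (α₁ ε) (ρ r), fun ξ d z T hξ hd hd1 hT hz hτ => ?_⟩
    by_contra! hbad
    have hVT : α₁ ε ≤ V (z T) := (hα₁.1.le_of_le hε.le hbad.le).trans (hα _).1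
    have h1 := hz.lyapunov_le hH hd hd1 hVd (a := 0) (b := T) (c := α₃ (α₁ ε) (ρ r)) le_rfl le_rfl
      (fun s hs v hv => (hdec' _ v hv).trans (neg_le_neg ?_)) T ⟨hT, le_rfl⟩
    · rw [hz.apply_zero hT, sub_zero] at h1
      rw [div_lt_iff₀ ha3] at hτ
      have := (hα ξ).2.trans (hα₂.1.le_of_le (norm_nonneg _) hξ)
      linarith
    · have hs' : s ∈ Icc 0 T := ⟨hs.1, hs.2.le⟩
      have h2 : ‖z s‖ ≤ ρ r := (hstate ξ d z T hd hd1 hz s hs').trans (hρmono _ _ (norm_nonneg _) hξ)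
      have h3 : α₁ ε ≤ V (z s) := hVT.trans (hVmono ξ d z T hd hd1 hz s hs' T ⟨hs'.2, le_rfl⟩)
      exact ((hα₃a _ hδ.le) (norm_nonneg (z s)) hρr h2).trans
        ((hα₃ _ (norm_nonneg _)).le_of_le hδ.le h3)
  let S : ℝ → ℝ → Set ℝ := fun s t => {y | ∃ ξ d z τ, ‖ξ‖ ≤ s ∧ Measurable d ∧ (∀ r, ‖d r‖ ≤ 1) ∧
    0 ≤ τ ∧ t ≤ τ ∧ IsTrajectoryOn (closedLoop f h l) d ξ z τ ∧ y = ‖h (z τ)‖}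
  have hSnn : ∀ s t, ∀ y ∈ S s t, 0 ≤ y := by
    rintro s t y ⟨ξ, d, z, τ, -, -, -, -, -, -, rfl⟩
    exact norm_nonneg _
  have hSle : ∀ s t, ∀ y ∈ S s t, y ≤ b s := by
    rintro s t y ⟨ξ, d, z, τ, hξ, hd, hd1, hτ, -, hz, rfl⟩
    exact (hout ξ d z τ hd hd1 hz τ ⟨hτ, le_rfl⟩).trans (hbmono _ _ (norm_nonneg _) hξ)
  have hSb : ∀ s t, BddAbove (S s t) := fun s t => ⟨b s, hSle s t⟩
  have hSmono : ∀ s s' t t', S s t ⊆ S s' t' → sSup (S s t) ≤ sSup (S s' t') := by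
    intro s s' t t' hsub
    exact Real.sSup_le (fun y hy => le_csSup (hSb s' t') (hsub hy)) (Real.sSup_nonneg (hSnn s' t'))
  obtain ⟨β, hβ, hψβ⟩ := exists_classKL_ge (ψ := fun s t => sSup (S s t))
    (fun t _ s s' hss => hSmono _ _ _ _ <| by
      rintro y ⟨ξ, d, z, τ, hξ, hrest⟩
      exact ⟨ξ, d, z, τ, hξ.trans hss, hrest⟩)
    (fun s hs t _ => by
      refine le_antisymm (Real.sSup_le ?_ le_rfl) (Real.sSup_nonneg (hSnn s t))
      rintro y hy
      have h1 := hSle s t y hy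
      obtain ⟨ξ, d, z, τ, hξ, -⟩ := hy
      have : s = 0 := le_antisymm hs ((norm_nonneg _).trans hξ)
      rwa [this, hb0] at h1)
    (by
      have hbc : Tendsto b (𝓝[≥] 0) (𝓝 0) := by
        have : ContinuousOn b (Ici 0) := hγ.1.1.comp hα₂.1.1 fun s hs => hα₂.1.nonneg hs
        have h1 := (this 0 self_mem_Ici).tendsto
        rwa [hb0] at h1
      refine squeeze_zero' (Eventually.of_forall fun s => Real.sSup_nonneg (hSnn s 0)) ?_ hbc
      filter_upwards [self_mem_nhdsWithin] with s hs
      exact Real.sSup_le (hSle s 0) (hbnn s hs))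
    (fun s t _ t' _ htt => hSmono _ _ _ _ <| by
      rintro y ⟨ξ, d, z, τ, hξ, hd, hd1, hτ, hτt, hrest⟩
      exact ⟨ξ, d, z, τ, hξ, hd, hd1, hτ, htt.trans hτt, hrest⟩)
    (fun s => by
      rw [Metric.tendsto_atTop]
      intro ε hε
      by_cases hs : 0 ≤ s
      · obtain ⟨τ₀, hτ₀⟩ := hattr s (ε / 2) hs (by positivity)
        refine ⟨τ₀ + 1, fun t ht => ?_⟩
        rw [Real.dist_0_eq_abs, abs_of_nonneg (Real.sSup_nonneg (hSnn s t))]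
        refine (Real.sSup_le ?_ (by positivity)).trans_lt (half_lt_self hε)
        rintro y ⟨ξ, d, z, τ, hξ, hd, hd1, hτ, hτt, hz, rfl⟩
        exact hτ₀ ξ d z τ hξ hd hd1 hτ hz (by linarith)
      · refine ⟨0, fun t ht => ?_⟩
        rw [Real.dist_0_eq_abs, abs_of_nonneg (Real.sSup_nonneg (hSnn s t))]
        refine (Real.sSup_le ?_ le_rfl).trans_lt hε
        rintro y ⟨ξ, d, z, τ, hξ, -⟩
        exact absurd ((norm_nonneg _).trans hξ) hs)
  refine ⟨l, β, hl, hls, hβ, fun ξ d hd => ?_, fun ξ d z hd hz t ht => ?_⟩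
  · obtain ⟨d', hd', hd1, hiff⟩ := hd.exists_norm_le f h l
    obtain ⟨z, hz⟩ := exists_isTrajectoryOn (ξ := ξ) hH hd' hd1
      (R := ρ ‖ξ‖) fun z T _ hz => hstate ξ d' z T hd' hd1 hz
    exact ⟨z, (hiff ξ z).2 fun t ht => (hz t).2 t ⟨ht, le_rfl⟩⟩
  · obtain ⟨d', hd', hd1, hiff⟩ := hd.exists_norm_le f h l
    have hzt : IsTrajectoryOn (closedLoop f h l) d' ξ z t :=
      isTrajectoryOn_of_forall_eq hH.continuous hd' hd1 ((hiff ξ z).1 hz)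
        (fun T _ hzT => hstate ξ d' z T hd' hd1 hzT) ht
    exact (le_csSup (hSb ‖ξ‖ t) ⟨ξ, d', z, t, le_rfl, hd', hd1, ht, le_rfl, hzt, rfl⟩).trans
      (hψβ ‖ξ‖ t (norm_nonneg _) ht)

end System

section System

variable {n m p : ℕ}
  {f : EuclideanSpace ℝ (Fin n) → EuclideanSpace ℝ (Fin m) → EuclideanSpace ℝ (Fin n)}
  {h : EuclideanSpace ℝ (Fin n) → EuclideanSpace ℝ (Fin p)}
  {x : ℝ → EuclideanSpace ℝ (Fin n) → (ℝ → EuclideanSpace ℝ (Fin m)) → EuclideanSpace ℝ (Fin n)}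

/-- Decreasing the gain keeps the output estimate, also for trajectories on bounded intervals. -/
theorem norm_output_le_of_gain_le {lam l : ℝ → ℝ} {β : ℝ → ℝ → ℝ}
    (hf : LocallyLipschitz fun q : EuclideanSpace ℝ (Fin n) × EuclideanSpace ℝ (Fin m) =>
      f q.1 q.2) (hh : Continuous h) (hB : IsBIBS f x) (hlam : IsClassK lam) (hl : IsClassK l)
    (hle : ∀ s, 0 ≤ s → l s ≤ lam s)
    (hβ : ∀ ξ d z, IsDisturbance d → SolvesClosedLoop f h lam ξ d z →
      ∀ t ∈ Ici (0:ℝ), ‖h (z t)‖ ≤ β ‖ξ‖ t)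
    {d : ℝ → EuclideanSpace ℝ (Fin m)} (hd : Measurable d) (hd1 : ∀ s, ‖d s‖ ≤ 1)
    {ξ : EuclideanSpace ℝ (Fin n)} {z : ℝ → EuclideanSpace ℝ (Fin n)} {T : ℝ}
    (hz : IsTrajectoryOn (closedLoop f h l) d ξ z T) :
    ∀ t ∈ Icc 0 T, ‖h (z t)‖ ≤ β ‖ξ‖ t := by
  intro t ht
  have hT : 0 ≤ T := ht.1.trans ht.2
  obtain ⟨σ, hσ, hbibs⟩ := hB.exists_norm_le hf
  set z' : ℝ → EuclideanSpace ℝ (Fin n) := IccExtend hT ((Icc 0 T).domRestrict z) with hz'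
  have hc : Continuous z' := (continuousOn_iff_continuous_domRestrict.1 hz.1).Icc_extend'
  have heq : ∀ s ∈ Icc 0 T, z' s = z s := fun s hs => IccExtend_of_mem hT _ hs
  set d' : ℝ → EuclideanSpace ℝ (Fin m) := fun s => (l ‖h (z' s)‖ / lam ‖h (z' s)‖) • d s with hd'
  have hd'm : Measurable d' := ((hl.continuous_comp_norm (hh.comp hc)).measurable.div
    (hlam.continuous_comp_norm (hh.comp hc)).measurable).smul hd
  have hd'1 : ∀ s, ‖d' s‖ ≤ 1 := by
    intro s
    have h1 := hl.nonneg (norm_nonneg (h (z' s)))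
    have h2 := hlam.nonneg (norm_nonneg (h (z' s)))
    rw [hd', norm_smul, Real.norm_of_nonneg (div_nonneg h1 h2)]
    exact mul_le_one₀ (div_le_one_of_le₀ (hle _ (norm_nonneg _)) h2) (norm_nonneg _) (hd1 s)
  have hzl : IsTrajectoryOn (closedLoop f h lam) d' ξ z T := by
    refine hz.congr fun s hs => ?_
    simp only [closedLoop, hd', heq s hs, smul_smul]
    congr 2
    by_cases h0 : lam ‖h (z s)‖ = 0
    · have : l ‖h (z s)‖ = 0 :=
        le_antisymm ((hle _ (norm_nonneg _)).trans h0.le) (hl.nonneg (norm_nonneg _))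
      rw [h0, this, zero_mul]
    · field_simp
  obtain ⟨y, hy⟩ := exists_isTrajectoryOn (ξ := z T) (w := fun _ => 0) (C := 0)
    hf measurable_const (by simp) (R := max (σ ‖z T‖) (σ 0))
    fun y S _ hy => hbibs _ 0 _ y S measurable_const le_rfl (by simp) hy
  have hy' : ∀ S, IsTrajectoryOn (closedLoop f h lam) (fun _ => 0) (z T) y S := fun S =>
    (hy S).congr fun s _ => by simp only [closedLoop, smul_zero]
  have hcat : ∀ S, 0 ≤ S → IsTrajectoryOn (closedLoop f h lam) (concatAt T d' fun _ => 0) ξ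
      (concatAt T z y) (T + S) := fun S hS =>
    hzl.concatAt (continuous_closedLoop hf.continuous hh hlam) hd'm hd'1 measurable_const
      (by simp) hT hS (hy' S)
  have hdist : IsDisturbance (concatAt T d' fun _ => 0) := by
    refine isDisturbance_of_norm_le (hd'm.concatAt measurable_const T) fun s => ?_
    unfold concatAt
    split_ifs
    · exact hd'1 s
    · simp
  have := hβ ξ _ (concatAt T z y) hdist
    (fun s hs => (hcat s hs).2 s ⟨hs, by linarith⟩) t ht.1
  rwa [concatAt, if_pos ht.2] at this

theorem IsROS.exists_gain (hR : IsROS f h)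
    (hf : LocallyLipschitz fun q : EuclideanSpace ℝ (Fin n) × EuclideanSpace ℝ (Fin m) =>
      f q.1 q.2) (hh : Continuous h) (hB : IsBIBS f x) :
    ∃ (l : ℝ → ℝ) (β : ℝ → ℝ → ℝ) (ρ : ℝ → ℝ), IsClassKInfty l ∧ IsClassKL β ∧
      MonotoneOn ρ (Ici 0) ∧
      (∀ s t, 0 ≤ s → 0 ≤ t → |l s - l t| ≤ 2 * |s - t|) ∧
      ∀ ξ d z T, Measurable d → (∀ s, ‖d s‖ ≤ 1) → IsTrajectoryOn (closedLoop f h l) d ξ z T →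
        ∀ t ∈ Icc 0 T, ‖h (z t)‖ ≤ β ‖ξ‖ t ∧ ‖z t‖ ≤ ρ ‖ξ‖ := by
  obtain ⟨lam, β, hlam, -, hβ, -, hest⟩ := hR
  obtain ⟨σ, hσ, hbibs⟩ := hB.exists_norm_le hf
  obtain ⟨l, hl, -, hlL, hle⟩ := exists_smooth_classKInfty_le (a := lam) hlam.1.2.1.monotoneOn
    hlam.1.2.2 (fun s hs => hlam.1.pos hs) hlam.2
  have hβ0 := hβ.1 0 self_mem_Ici
  refine ⟨l, β, fun s => max (σ s) (σ (l (β s 0))), hl, hβ, ?_, hlL, ?_⟩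
  · intro r hr s hs hrs
    exact max_le_max (hσ.le_of_le hr hrs) (hσ.le_of_le (hl.1.nonneg (hβ0.nonneg hr))
      (hl.1.le_of_le (hβ0.nonneg hr) (hβ0.le_of_le hr hrs)))
  · intro ξ d z T hd hd1 hz t ht
    have hout := norm_output_le_of_gain_le hf hh hB hlam.1 hl.1 hle hest hd hd1 hz
    refine ⟨hout t ht, hz.norm_le_of_closedLoop hbibs hh hl.1 hd hd1 (fun s hs => ?_) t ht⟩
    exact (hout s hs).trans ((hβ.2 _ (norm_nonneg ξ)).1 self_mem_Ici hs.1 hs.1)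

end System

/-- From a uniform `KL` estimate on the output `o` along the trajectories of `ż = H(z,w)`,
`‖w‖ ≤ 1`, one obtains a function dominating `o - ε` which is Lipschitz on balls and decays
exponentially, to second order along Euler steps. -/
theorem exists_exponentially_decaying {E D : Type*} [NormedAddCommGroup E] [NormedSpace ℝ E]
    [FiniteDimensional ℝ E] [NormedAddCommGroup D] [ProperSpace D] [MeasurableSpace D]
    [BorelSpace D] {H : E × D → E} (hH : LocallyLipschitz H) {o : E → ℝ} (ho : LocallyLipschitz o)
    {β : ℝ → ℝ → ℝ} {ρ : ℝ → ℝ} (hβ : IsClassKL β) (hρ : MonotoneOn ρ (Ici 0))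
    (hest : ∀ ξ w z T, Measurable w → (∀ s, ‖w s‖ ≤ 1) → IsTrajectoryOn H w ξ z T →
      ∀ t ∈ Icc 0 T, o (z t) ≤ β ‖ξ‖ t ∧ ‖z t‖ ≤ ρ ‖ξ‖) {ε : ℝ} (hε : 0 < ε) :
    ∃ U : E → ℝ, (∀ ξ, 0 ≤ U ξ) ∧ (∀ ξ, o ξ - ε ≤ U ξ) ∧ U 0 = 0 ∧
      (∀ R, ∃ L, 0 ≤ L ∧ ∀ ξ ξ', ‖ξ‖ ≤ R → ‖ξ'‖ ≤ R → U ξ ≤ U ξ' + L * ‖ξ - ξ'‖) ∧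
      ∀ R, ∃ C, 0 ≤ C ∧ ∀ ξ v τ, ‖ξ‖ ≤ R → ‖v‖ ≤ 1 → 0 ≤ τ → τ ≤ 1 →
        U (ξ + τ • H (ξ, v)) ≤ (1 - τ) * U ξ + C * τ ^ 2 := by
  have : ProperSpace E := FiniteDimensional.proper ℝ E
  have hβ0 : ∀ r s t, 0 ≤ r → r ≤ s → 0 ≤ t → β r t ≤ β s t := fun r s t hr hrs ht =>
    (hβ.1 t ht).le_of_le hr hrs
  have hexist : ∀ ξ w, Measurable w → (∀ s, ‖w s‖ ≤ 1) → ∃ z, ∀ T, IsTrajectoryOn H w ξ z T :=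
    fun ξ w hw hw1 => exists_isTrajectoryOn hH hw hw1 (R := ρ ‖ξ‖)
      fun z T _ hz t ht => (hest ξ w z T hw hw1 hz t ht).2
  let S : E → Set ℝ := fun ξ => {y | ∃ w z t, Measurable w ∧ (∀ s, ‖w s‖ ≤ 1) ∧ 0 ≤ t ∧
    IsTrajectoryOn H w ξ z t ∧ y = max (o (z t) - ε) 0 * Real.exp t}
  have hSnn : ∀ ξ, ∀ y ∈ S ξ, 0 ≤ y := by
    rintro ξ y ⟨w, z, t, -, -, -, -, rfl⟩
    positivity
  have hvanish : ∀ R, 0 ≤ R → ∃ τ, 0 ≤ τ ∧ ∀ ξ w z t, ‖ξ‖ ≤ R → Measurable w →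
      (∀ s, ‖w s‖ ≤ 1) → τ ≤ t → IsTrajectoryOn H w ξ z t → o (z t) - ε ≤ 0 := by
    intro R hR
    obtain ⟨τ, hτ, hτ0⟩ := (((hβ.2 R hR).2.eventually_lt_const hε).and
      (eventually_ge_atTop 0)).exists
    refine ⟨τ, hτ0, fun ξ w z t hξ hw hw1 hτt hz => ?_⟩
    have ht : 0 ≤ t := hτ0.trans hτt
    have h1 := (hest ξ w z t hw hw1 hz t ⟨ht, le_rfl⟩).1
    have h2 := hβ0 ‖ξ‖ R t (norm_nonneg _) hξ ht
    have h3 : β R t ≤ β R τ := (hβ.2 R hR).1 hτ0 ht hτt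
    linarith
  have hbound : ∀ R, 0 ≤ R → ∃ B, 0 ≤ B ∧ ∀ ξ, ‖ξ‖ ≤ R → ∀ y ∈ S ξ, y ≤ B := by
    intro R hR
    obtain ⟨τ, hτ0, hτ⟩ := hvanish R hR
    have hβR : 0 ≤ β R 0 := (hβ.1 0 self_mem_Ici).nonneg hR
    refine ⟨β R 0 * Real.exp τ, by positivity, ?_⟩
    rintro ξ hξ y ⟨w, z, t, hw, hw1, ht, hz, rfl⟩
    rcases le_total t τ with htτ | htτ
    · have h1 := (hest ξ w z t hw hw1 hz t ⟨ht, le_rfl⟩).1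
      have h2 := hβ0 ‖ξ‖ R t (norm_nonneg _) hξ ht
      have h3 : β R t ≤ β R 0 := (hβ.2 R hR).1 self_mem_Ici ht ht
      gcongr
      exact max_le (by linarith) hβR
    · rw [max_eq_right (hτ ξ w z t hξ hw hw1 htτ hz), zero_mul]
      positivity
  have hSb : ∀ ξ, BddAbove (S ξ) := fun ξ => by
    obtain ⟨B, -, hB⟩ := hbound ‖ξ‖ (norm_nonneg _)
    exact ⟨B, hB ξ le_rfl⟩
  set U : E → ℝ := fun ξ => sSup (S ξ) with hU
  have hUnn : ∀ ξ, 0 ≤ U ξ := fun ξ => Real.sSup_nonneg (hSnn ξ)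
  have hUge : ∀ ξ w z t, Measurable w → (∀ s, ‖w s‖ ≤ 1) → 0 ≤ t → IsTrajectoryOn H w ξ z t →
      max (o (z t) - ε) 0 * Real.exp t ≤ U ξ := fun ξ w z t hw hw1 ht hz =>
    le_csSup (hSb ξ) ⟨w, z, t, hw, hw1, ht, hz, rfl⟩
  have hlip : ∀ R, ∃ L, 0 ≤ L ∧ ∀ ξ ξ', ‖ξ‖ ≤ R → ‖ξ'‖ ≤ R → U ξ ≤ U ξ' + L * ‖ξ - ξ'‖ := by
    intro R
    by_cases hR : 0 ≤ R
    swap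
    · exact ⟨0, le_rfl, fun ξ _ hξ => absurd ((norm_nonneg _).trans hξ) hR⟩
    obtain ⟨τ, hτ0, hτ⟩ := hvanish R hR
    obtain ⟨K, hK0, hK⟩ := hH.exists_norm_sub_le (ρ R) 1
    obtain ⟨L, hL⟩ := LocallyLipschitzOn.exists_lipschitzOnWith_of_compact
      (isCompact_closedBall (0:E) (ρ R)) ho.locallyLipschitzOn
    refine ⟨L * Real.exp (K * τ) * Real.exp τ, by positivity, fun ξ ξ' hξ hξ' => ?_⟩
    refine Real.sSup_le ?_ (add_nonneg (hUnn ξ') (by positivity))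
    rintro y ⟨w, z, t, hw, hw1, ht, hz, rfl⟩
    rcases le_total t τ with htτ | htτ
    · obtain ⟨z', hz'⟩ := hexist ξ' w hw hw1
      have hb : ∀ s ∈ Icc 0 t, ‖z s‖ ≤ ρ R := fun s hs =>
        (hest ξ w z t hw hw1 hz s hs).2.trans (hρ (norm_nonneg _) hR hξ)
      have hb' : ∀ s ∈ Icc 0 t, ‖z' s‖ ≤ ρ R := fun s hs =>
        (hest ξ' w z' t hw hw1 (hz' t) s hs).2.trans (hρ (norm_nonneg _) hR hξ')
      have htt : t ∈ Icc 0 t := ⟨ht, le_rfl⟩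
      have h1 := hz.norm_sub_le hH.continuous hw hw1 hK0 hK (hz' t) hb hb' t htt
      have h2 := hUge ξ' w z' t hw hw1 ht (hz' t)
      have h3 := hL.norm_sub_le (x := z t) (y := z' t) (by simpa using hb t htt)
        (by simpa using hb' t htt)
      have h4 : o (z t) ≤ o (z' t) + L * (‖ξ - ξ'‖ * Real.exp (K * τ)) := by
        have h5 : ‖z t - z' t‖ ≤ ‖ξ - ξ'‖ * Real.exp (K * τ) := h1.trans (by gcongr)
        have h6 := (le_abs_self _).trans (h3.trans (mul_le_mul_of_nonneg_left h5 L.2))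
        linarith
      have h7 : max (o (z t) - ε) 0
          ≤ max (o (z' t) - ε) 0 + L * (‖ξ - ξ'‖ * Real.exp (K * τ)) := by
        refine max_le ?_ (by positivity)
        linarith [le_max_left (o (z' t) - ε) 0]
      calc max (o (z t) - ε) 0 * Real.exp t
          ≤ (max (o (z' t) - ε) 0 + L * (‖ξ - ξ'‖ * Real.exp (K * τ))) * Real.exp t := by gcongr
        _ = max (o (z' t) - ε) 0 * Real.exp t
            + L * (‖ξ - ξ'‖ * Real.exp (K * τ)) * Real.exp t := by ring
        _ ≤ U ξ' + L * (‖ξ - ξ'‖ * Real.exp (K * τ)) * Real.exp τ := by gcongr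
        _ = _ := by ring
    · rw [max_eq_right (hτ ξ w z t hξ hw hw1 htτ hz), zero_mul]
      exact add_nonneg (hUnn ξ') (by positivity)
  have hdecay : ∀ ξ w z τ, Measurable w → (∀ s, ‖w s‖ ≤ 1) → 0 ≤ τ → IsTrajectoryOn H w ξ z τ →
      U (z τ) ≤ Real.exp (-τ) * U ξ := by
    intro ξ w z τ hw hw1 hτ hz
    refine Real.sSup_le ?_ (mul_nonneg (Real.exp_pos _).le (hUnn ξ))
    rintro y ⟨w₁, z₁, t, hw₁, hw₁1, ht, hz₁, rfl⟩
    have hcat := hz.concatAt hH.continuous hw hw1 hw₁ hw₁1 hτ ht hz₁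
    have hval : concatAt τ z z₁ (τ + t) = z₁ t := by
      rcases eq_or_lt_of_le ht with rfl | ht
      · rw [concatAt, add_zero, if_pos le_rfl, hz₁.apply_zero le_rfl]
      · rw [concatAt, if_neg (by linarith), add_sub_cancel_left]
    have h1 := hUge ξ _ _ (τ + t) (hw.concatAt hw₁ τ) (fun s => by
      unfold concatAt
      split_ifs
      · exact hw1 s
      · exact hw₁1 _) (by linarith) hcat
    rw [hval, Real.exp_add] at h1
    rw [Real.exp_neg, inv_mul_eq_div, le_div_iff₀ (Real.exp_pos _)]
    linarith
  refine ⟨U, hUnn, fun ξ => ?_, ?_, hlip, fun R => ?_⟩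
  · have hz : IsTrajectoryOn H (fun _ => 0) ξ (fun _ => ξ) 0 :=
      ⟨continuousOn_const, fun t ht => by
        have : t = 0 := le_antisymm ht.2 ht.1
        simp [this]⟩
    have := hUge ξ _ _ 0 measurable_const (by simp) le_rfl hz
    rw [Real.exp_zero, mul_one] at this
    exact (le_max_left _ _).trans this
  · refine le_antisymm (Real.sSup_le ?_ le_rfl) (hUnn 0)
    rintro y ⟨w, z, t, hw, hw1, ht, hz, rfl⟩
    have h1 := (hest 0 w z t hw hw1 hz t ⟨ht, le_rfl⟩).1
    rw [norm_zero, show β 0 t = 0 from (hβ.1 t ht).2.2] at h1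
    rw [max_eq_right (by linarith), zero_mul]
  · by_cases hR : 0 ≤ R
    swap
    · exact ⟨0, le_rfl, fun ξ _ _ hξ => absurd ((norm_nonneg _).trans hξ) hR⟩
    have hRρ : R ≤ max R (ρ R) := le_max_left _ _
    obtain ⟨M, hM0, hM⟩ := hH.continuous.exists_norm_le_of_norm_le (max R (ρ R)) 1
    obtain ⟨K, hK0, hK⟩ := hH.exists_norm_sub_le (max R (ρ R)) 1
    obtain ⟨L, hL0, hL⟩ := hlip (max R (ρ R) + M)
    obtain ⟨B, hB0, hB⟩ := hbound R hR
    refine ⟨B + L * (K * M), by positivity, fun ξ v τ hξ hv hτ0 hτ1 => ?_⟩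
    obtain ⟨z, hz⟩ := hexist ξ (fun _ => v) measurable_const fun _ => hv
    have hzb : ∀ s, 0 ≤ s → ‖z s‖ ≤ max R (ρ R) := fun s hs =>
      ((hest ξ _ z s measurable_const (fun _ => hv) (hz s) s ⟨hs, le_rfl⟩).2.trans
        (hρ (norm_nonneg _) hR hξ)).trans (le_max_right _ _)
    have hspeed : ∀ s, 0 ≤ s → ‖z s - ξ‖ ≤ M * s := by
      intro s hs
      rw [(hz s).2 s ⟨hs, le_rfl⟩, add_sub_cancel_left]
      refine (intervalIntegral.norm_integral_le_of_norm_le_const fun r hr => ?_).trans_eq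
        (by rw [sub_zero, abs_of_nonneg hs])
      rw [uIoc_of_le hs] at hr
      exact hM _ _ (hzb r hr.1.le) hv
    have hclose : ‖ξ + τ • H (ξ, v) - z τ‖ ≤ K * M * τ ^ 2 := by
      have hi := (hz τ).intervalIntegrable hH.continuous measurable_const (fun _ => hv)
        ⟨le_rfl, hτ0⟩ ⟨hτ0, le_rfl⟩
      have h1 : z τ - (ξ + τ • H (ξ, v)) = ∫ s in (0:ℝ)..τ, (H (z s, v) - H (ξ, v)) := by
        rw [intervalIntegral.integral_sub hi (by simp), intervalIntegral.integral_const, sub_zero]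
        conv_lhs => rw [(hz τ).2 τ ⟨hτ0, le_rfl⟩]
        abel
      rw [norm_sub_rev, h1]
      refine (intervalIntegral.norm_integral_le_of_norm_le_const (C := K * (M * τ))
        fun r hr => ?_).trans_eq (by rw [sub_zero, abs_of_nonneg hτ0]; ring)
      rw [uIoc_of_le hτ0] at hr
      refine (hK _ _ _ (hzb r hr.1.le) (hξ.trans hRρ) hv).trans ?_
      refine mul_le_mul_of_nonneg_left ((hspeed r hr.1.le).trans ?_) hK0
      exact mul_le_mul_of_nonneg_left hr.2 hM0
    have hstep : ‖ξ + τ • H (ξ, v)‖ ≤ max R (ρ R) + M := by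
      refine (norm_add_le _ _).trans (add_le_add (hξ.trans hRρ) ?_)
      rw [norm_smul, Real.norm_of_nonneg hτ0]
      have := hM ξ v (hξ.trans hRρ) hv
      nlinarith [norm_nonneg (H (ξ, v))]
    have h2 := hL _ _ hstep ((hzb τ hτ0).trans (by linarith))
    have h3 := hdecay ξ _ z τ measurable_const (fun _ => hv) hτ0 (hz τ)
    have h4 : Real.exp (-τ) ≤ 1 - τ + τ ^ 2 := by
      have := Real.abs_exp_sub_one_sub_id_le (x := -τ) (by rw [abs_neg, abs_of_nonneg hτ0]; exact hτ1)
      have := (abs_le.1 this).2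
      nlinarith
    have h5 : U ξ ≤ B := Real.sSup_le (hB ξ hξ) hB0
    have h6 := hUnn ξ
    have h7 : Real.exp (-τ) * U ξ ≤ (1 - τ) * U ξ + B * τ ^ 2 := by nlinarith [sq_nonneg τ]
    have h8 := mul_le_mul_of_nonneg_left hclose hL0
    nlinarith

/-- Any sequence of smooth functions can be summed smoothly, and differentiated term by term,
once multiplied by sufficiently small constants. -/
theorem exists_pos_contDiff_tsum {E : Type*} [NormedAddCommGroup E] [InnerProductSpace ℝ E]
    [FiniteDimensional ℝ E] {F : ℕ → E → ℝ} (hF : ∀ j, ContDiff ℝ (⊤ : ℕ∞) (F j)) :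
    ∃ c : ℕ → ℝ, (∀ j, 0 < c j) ∧ ∀ c' : ℕ → ℝ, (∀ j, 0 ≤ c' j) → (∀ j, c' j ≤ c j) →
      ContDiff ℝ (⊤ : ℕ∞) (fun x => ∑' j, c' j * F j x) ∧
      (∀ x, Summable fun j => c' j * F j x) ∧
      ∀ x v, HasSum (fun j => c' j * fderiv ℝ (F j) x v)
        (fderiv ℝ (fun x => ∑' j, c' j * F j x) x v) := by
  have : ProperSpace E := FiniteDimensional.proper ℝ E
  let φ : ℕ → ContDiffBump (0 : E) := fun R => ⟨R + 1, R + 2, by positivity, by linarith⟩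
  have hφF : ∀ R j, ContDiff ℝ (⊤ : ℕ∞) fun x => φ R x * F j x := fun R j =>
    (φ R).contDiff.mul (hF j)
  have hφ1 : ∀ (R : ℕ) (x : E), ‖x‖ < R + 1 → ∀ᶠ y in 𝓝 x, φ R y = 1 := by
    intro R x hx
    have : ∀ᶠ y in 𝓝 x, ‖y‖ < R + 1 := continuous_norm.continuousAt.eventually_lt_const hx
    filter_upwards [this] with y hy
    exact (φ R).one_of_mem_closedBall (by simpa using hy.le)
  have hM : ∀ j R k, ∃ M, 0 ≤ M ∧ ∀ x, ‖iteratedFDeriv ℝ k (fun x => φ R x * F j x) x‖ ≤ M := by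
    intro j R k
    have hc : HasCompactSupport (fun x => φ R x * F j x) := (φ R).hasCompactSupport.mul_right
    have hcont := (hφF R j).continuous_iteratedFDeriv (m := k) (by exact_mod_cast le_top)
    obtain ⟨M, hM⟩ := hcont.bounded_above_of_compact_support (hc.iteratedFDeriv k)
    exact ⟨M, (norm_nonneg _).trans (hM 0), hM⟩
  choose M hM0 hM using hM
  have hS0 : ∀ j, 0 ≤ ∑ R ∈ Finset.range (j + 1), ∑ k ∈ Finset.range (j + 1), M j R k :=
    fun j => Finset.sum_nonneg fun R _ => Finset.sum_nonneg fun k _ => hM0 j R k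
  let c : ℕ → ℝ := fun j => (1 / 2) ^ j /
    (1 + ∑ R ∈ Finset.range (j + 1), ∑ k ∈ Finset.range (j + 1), M j R k)
  have hcpos : ∀ j, 0 < c j := fun j => by have := hS0 j; positivity
  have hcM : ∀ R k, Summable fun j => c j * M j R k := by
    intro R k
    refine Summable.of_norm_bounded_eventually_nat (g := fun j => (1 / 2 : ℝ) ^ j)
      summable_geometric_two ?_
    filter_upwards [eventually_ge_atTop R, eventually_ge_atTop k] with j hR hk
    rw [Real.norm_of_nonneg (mul_nonneg (hcpos j).le (hM0 j R k))]
    have h1 : M j R k ≤ ∑ R ∈ Finset.range (j + 1), ∑ k ∈ Finset.range (j + 1), M j R k :=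
      (Finset.single_le_sum (f := fun k => M j R k) (fun k _ => hM0 j R k)
        (Finset.mem_range.2 (by omega))).trans
      (Finset.single_le_sum (f := fun R => ∑ k ∈ Finset.range (j + 1), M j R k)
        (fun R _ => Finset.sum_nonneg fun k _ => hM0 j R k) (Finset.mem_range.2 (by omega)))
    have h2 := hS0 j
    simp only [c]
    rw [div_mul_eq_mul_div, div_le_iff₀ (by positivity)]
    gcongr
    linarith
  refine ⟨c, hcpos, fun c' hc'0 hc'c => ?_⟩
  let G : ℕ → ℕ → E → ℝ := fun R j x => c' j * (φ R x * F j x)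
  have hGs : ∀ R j, ContDiff ℝ (⊤ : ℕ∞) (G R j) := fun R j => contDiff_const.mul (hφF R j)
  have hGb : ∀ R j k x, ‖iteratedFDeriv ℝ k (G R j) x‖ ≤ c j * M j R k := by
    intro R j k x
    have : iteratedFDeriv ℝ k (G R j) x
        = c' j • iteratedFDeriv ℝ k (fun x => φ R x * F j x) x := by
      have := iteratedFDeriv_const_smul_apply (𝕜 := ℝ) (i := k) (a := c' j) (x := x)
        (((hφF R j).of_le (m := k) (by exact_mod_cast le_top)).contDiffAt)
      simpa only [Pi.smul_def, smul_eq_mul] using this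
    rw [this, norm_smul, Real.norm_of_nonneg (hc'0 j)]
    exact mul_le_mul (hc'c j) (hM j R k x) (norm_nonneg _) (hcpos j).le
  have hGc : ∀ R, ContDiff ℝ (⊤ : ℕ∞) fun x => ∑' j, G R j x := fun R =>
    contDiff_tsum (hGs R) (fun k _ => hcM R k) fun k j x _ => hGb R j k x
  have hG0 : ∀ R x, Summable fun j => G R j x := fun R x =>
    (hcM R 0).of_norm_bounded fun j => by simpa using hGb R j 0 x
  have hGd : ∀ R x, HasSum (fun j => fderiv ℝ (G R j) x) (fderiv ℝ (fun x => ∑' j, G R j x) x) := by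
    intro R x
    have hb : ∀ j x, ‖fderiv ℝ (G R j) x‖ ≤ c j * M j R 1 := fun j x => by
      rw [← norm_iteratedFDeriv_one]; exact hGb R j 1 x
    rw [fderiv_tsum_apply (hcM R 1) (fun j => (hGs R j).differentiable (by simp)) hb (hG0 R 0)]
    exact ((hcM R 1).of_norm_bounded fun j => hb j x).hasSum
  have hlt : ∀ x : E, ‖x‖ < (⌈‖x‖⌉₊ : ℝ) + 1 := fun x =>
    (Nat.le_ceil _).trans_lt (lt_add_one _)
  have hloc : ∀ x, (fun y => ∑' j, c' j * F j y) =ᶠ[𝓝 x] fun y => ∑' j, G ⌈‖x‖⌉₊ j y := by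
    intro x
    filter_upwards [hφ1 ⌈‖x‖⌉₊ x (hlt x)] with y hy
    simp only [G, hy, one_mul]
  refine ⟨contDiff_iff_contDiffAt.2 fun x => (hGc _).contDiffAt.congr_of_eventuallyEq (hloc x),
    fun x => ?_, fun x v => ?_⟩
  · have h1 := (hφ1 ⌈‖x‖⌉₊ x (hlt x)).self_of_nhds
    simpa only [G, h1, one_mul] using hG0 ⌈‖x‖⌉₊ x
  · rw [(hloc x).fderiv_eq]
    have h2 := (hGd ⌈‖x‖⌉₊ x).mapL (ContinuousLinearMap.apply ℝ ℝ v)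
    convert! h2 using 1
    funext j
    have h3 : G ⌈‖x‖⌉₊ j =ᶠ[𝓝 x] fun y => c' j * F j y := by
      filter_upwards [hφ1 ⌈‖x‖⌉₊ x (hlt x)] with y hy
      simp only [G, hy, one_mul]
    simp [h3.fderiv_eq, fderiv_const_mul ((hF j).differentiable (by simp) x)]

/-- There are positive smooth functions which are, together with their derivative, arbitrarily
small at infinity. -/
theorem exists_contDiff_pos_le {E : Type*} [NormedAddCommGroup E] [InnerProductSpace ℝ E]
    [FiniteDimensional ℝ E] {b : ℝ → ℝ} (hb : Antitone b) (hb0 : ∀ s, 0 < b s) :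
    ∃ σ : E → ℝ, ContDiff ℝ (⊤ : ℕ∞) σ ∧ (∀ x, 0 < σ x) ∧ (∀ x, σ x ≤ b ‖x‖) ∧
      ∀ x, ‖fderiv ℝ σ x‖ ≤ b ‖x‖ := by
  let φ : ℕ → ContDiffBump (0 : E) := fun R => ⟨R + 1, R + 2, by positivity, by linarith⟩
  have hφ : ∀ j, ContDiff ℝ (⊤ : ℕ∞) (φ j : E → ℝ) := fun j => (φ j).contDiff
  have hM : ∀ j, ∃ M, 0 ≤ M ∧ ∀ x, ‖fderiv ℝ (φ j) x‖ ≤ M := by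
    intro j
    obtain ⟨M, hM⟩ := ((hφ j).continuous_fderiv (by simp)).bounded_above_of_compact_support
      ((φ j).hasCompactSupport.fderiv (𝕜 := ℝ))
    exact ⟨M, (norm_nonneg _).trans (hM 0), hM⟩
  choose M hM0 hM using hM
  obtain ⟨c, hc, hcF⟩ := exists_pos_contDiff_tsum hφ
  let c' : ℕ → ℝ := fun j => min (c j) ((1 / 2) ^ (j + 1) * b (j + 2) / (1 + M j))
  have hc'0 : ∀ j, 0 < c' j := fun j =>
    lt_min (hc j) (by have := hM0 j; have := hb0 (j + 2); positivity)
  obtain ⟨h1, h2, h3⟩ := hcF c' (fun j => (hc'0 j).le) fun j => min_le_left _ _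
  have hbd : ∀ (x : E) (y w : ℝ) (j : ℕ), |y| ≤ (1 + M j) * w → (y ≠ 0 → ‖x‖ ≤ j + 2) →
      ‖c' j * y‖ ≤ (1 / 2) ^ (j + 1) * b ‖x‖ * w := by
    intro x y w j hy hx
    have hMj := hM0 j
    have hw : 0 ≤ w := nonneg_of_mul_nonneg_right ((abs_nonneg _).trans hy) (by positivity)
    rcases eq_or_ne y 0 with rfl | hy0
    · have := hb0 ‖x‖
      simp only [mul_zero, norm_zero]
      positivity
    · have h4 := hb (hx hy0)
      have h5 := (hb0 (j + 2)).le
      calc ‖c' j * y‖ = c' j * |y| := by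
            rw [norm_mul, Real.norm_of_nonneg (hc'0 j).le, Real.norm_eq_abs]
        _ ≤ ((1 / 2) ^ (j + 1) * b (j + 2) / (1 + M j)) * ((1 + M j) * w) :=
            mul_le_mul (min_le_right _ _) hy (abs_nonneg _) (by positivity)
        _ = (1 / 2) ^ (j + 1) * b (j + 2) * w := by field_simp
        _ ≤ _ := by gcongr
  have hgeom : ∀ (x : E) (w : ℝ),
      HasSum (fun j : ℕ => (1 / 2) ^ (j + 1) * b ‖x‖ * w) (b ‖x‖ * w) := by
    intro x w
    convert! ((hasSum_geometric_two' (1 : ℝ)).mul_right (b ‖x‖)).mul_right w using 1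
    · funext j
      rw [one_div_pow, pow_succ]
      field_simp
    · ring
  have hsupp : ∀ j x, x ∈ tsupport (φ j) → ‖x‖ ≤ j + 2 := by
    intro j x hx
    rw [(φ j).tsupport_eq] at hx
    simpa using hx
  refine ⟨fun x => ∑' j, c' j * φ j x, h1, fun x => ?_, fun x => ?_, fun x => ?_⟩
  · refine (h2 x).tsum_pos (fun j => mul_nonneg (hc'0 j).le (φ j).nonneg) ⌈‖x‖⌉₊ ?_
    refine mul_pos (hc'0 _) ((φ _).pos_of_mem_ball ?_)
    have := Nat.le_ceil ‖x‖
    simp only [φ, Metric.mem_ball, dist_zero_right]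
    linarith
  · have h4 := tsum_of_norm_bounded (hgeom x 1) (f := fun j => c' j * φ j x) fun j =>
      hbd x _ 1 j ?_ fun h => hsupp j x (subset_tsupport _ h)
    · simpa using (le_abs_self _).trans h4
    · rw [abs_of_nonneg (φ j).nonneg]
      linarith [(φ j).le_one (x := x), hM0 j]
  · refine ContinuousLinearMap.opNorm_le_bound _ (hb0 _).le fun v => ?_
    rw [← (h3 x v).tsum_eq]
    refine tsum_of_norm_bounded (hgeom x ‖v‖) fun j => hbd x _ _ j ?_ fun h => hsupp j x ?_
    · refine ((fderiv ℝ (φ j) x).le_opNorm v).trans ?_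
      gcongr
      linarith [hM j x]
    · refine support_fderiv_subset ℝ (f := φ j) fun h0 => h ?_
      simp [h0]

/-- Convolution with a smooth kernel of variable positive radius is smooth. -/
theorem contDiff_integral_sub_smul {E : Type*} [NormedAddCommGroup E] [NormedSpace ℝ E]
    [FiniteDimensional ℝ E] [MeasurableSpace E] [BorelSpace E] {μ : Measure E} [μ.IsAddHaarMeasure]
    {U ψ σ : E → ℝ} (hU : Continuous U) (hψ : ContDiff ℝ (⊤ : ℕ∞) ψ)
    (hψ1 : ∀ η, 1 < ‖η‖ → ψ η = 0) (hσ : ContDiff ℝ (⊤ : ℕ∞) σ) (hσ0 : ∀ x, 0 < σ x)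
    (hσ1 : ∀ x, σ x ≤ 1) :
    ContDiff ℝ (⊤ : ℕ∞) fun x => ∫ η, ψ η * U (x - σ x • η) ∂μ := by
  have : ProperSpace E := FiniteDimensional.proper ℝ E
  have h1 := contDiffOn_convolution_left_with_param_comp (μ := μ) (ContinuousLinearMap.mul ℝ ℝ)
    (s := univ) (n := ⊤) (v := fun x : E => x) contDiffOn_id (f := U)
    (g := fun x ζ => (σ x ^ Module.finrank ℝ E)⁻¹ * ψ ((σ x)⁻¹ • ζ))
    (k := Metric.closedBall 0 1) isOpen_univ (isCompact_closedBall _ _) ?_ hU.locallyIntegrable ?_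
  · rw [contDiffOn_univ] at h1
    convert! h1 using 1
    funext x
    have h2 := Measure.integral_comp_smul_of_nonneg μ
      (fun ζ => ψ ((σ x)⁻¹ • ζ) * U (x - ζ)) (σ x) (hR := (hσ0 x).le)
    simp only [inv_smul_smul₀ (hσ0 x).ne'] at h2
    rw [h2, convolution_def, ← integral_smul]
    simp [mul_assoc]
  · intro x ζ _ hζ
    rw [hψ1, mul_zero]
    rw [norm_smul, norm_inv, Real.norm_of_nonneg (hσ0 x).le]
    have : 1 < ‖ζ‖ := by simpa using hζ
    rw [inv_mul_eq_div, one_lt_div (hσ0 x)]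
    exact (hσ1 x).trans_lt this
  · refine ContDiff.contDiffOn ?_
    have h3 : ContDiff ℝ (⊤ : ℕ∞) fun q : E × E => σ q.1 := hσ.comp contDiff_fst
    exact ((h3.pow _).inv fun q => (pow_pos (hσ0 _) _).ne').mul
      (hψ.comp ((h3.inv fun q => (hσ0 _).ne').smul contDiff_snd))

/-- Smoothing of a function decreasing along the Euler steps of a family of vector fields. -/
theorem exists_contDiff_fderiv_le {E ι : Type*} [NormedAddCommGroup E] [InnerProductSpace ℝ E]
    [FiniteDimensional ℝ E] [MeasurableSpace E] [BorelSpace E] {U : E → ℝ} {g : E → ι → E}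
    (hU : ∀ R, ∃ L, 0 ≤ L ∧ ∀ ξ ξ', ‖ξ‖ ≤ R → ‖ξ'‖ ≤ R → U ξ ≤ U ξ' + L * ‖ξ - ξ'‖)
    (hg : ∀ R, ∃ K, 0 ≤ K ∧ ∀ ξ ξ' i, ‖ξ‖ ≤ R → ‖ξ'‖ ≤ R →
      ‖g ξ i‖ ≤ K ∧ ‖g ξ i - g ξ' i‖ ≤ K * ‖ξ - ξ'‖)
    (hE : ∀ R, ∃ C, 0 ≤ C ∧ ∀ ξ i τ, ‖ξ‖ ≤ R → 0 ≤ τ → τ ≤ 1 →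
      U (ξ + τ • g ξ i) ≤ (1 - τ) * U ξ + C * τ ^ 2) {ε : ℝ} (hε : 0 < ε) :
    ∃ W : E → ℝ, ContDiff ℝ (⊤ : ℕ∞) W ∧ (∀ ξ, |W ξ - U ξ| ≤ ε) ∧
      ∀ ξ i, fderiv ℝ W ξ (g ξ i) ≤ -U ξ + ε := by
  choose L hL0 hL using hU
  choose K hK0 hK using hg
  choose C hC0 hC using hE
  have hUc : Continuous U := by
    refine continuous_iff_continuousAt.2 fun x => tendsto_iff_norm_sub_tendsto_zero.2 ?_
    have h1 : Tendsto (fun y => L (‖x‖ + 1) * ‖y - x‖) (𝓝 x) (𝓝 0) :=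
      Continuous.tendsto' (by fun_prop) _ _ (by simp)
    refine squeeze_zero' (Eventually.of_forall fun y => norm_nonneg _) ?_ h1
    have h2 : ∀ᶠ y in 𝓝 x, ‖y‖ < ‖x‖ + 1 :=
      continuous_norm.continuousAt.eventually_lt_const (lt_add_one _)
    filter_upwards [h2] with y hy
    have h3 := hL (‖x‖ + 1) y x hy.le (by linarith)
    have h4 := hL (‖x‖ + 1) x y (by linarith) hy.le
    rw [norm_sub_rev] at h4
    rw [Real.norm_eq_abs, abs_le]
    constructor <;> linarith
  let P : ℕ → ℝ := fun N => ∑ R ∈ Finset.range (N + 1), L (R + 2) * (1 + 2 * K (R + 2))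
  have hP0 : ∀ N, 0 ≤ L (N + 2) * (1 + 2 * K (N + 2)) := fun N => by
    have := hL0 (N + 2); have := hK0 (N + 2); positivity
  have hPnn : ∀ N, 0 ≤ P N := fun N => Finset.sum_nonneg fun R _ => hP0 R
  have hPmono : Monotone P := fun N N' hN => Finset.sum_le_sum_of_subset_of_nonneg
    (Finset.range_mono (by omega)) fun R _ _ => hP0 R
  have hPle : ∀ N : ℕ, L (N + 2) * (1 + 2 * K (N + 2)) ≤ P N := fun N =>
    Finset.single_le_sum (f := fun R : ℕ => L (R + 2) * (1 + 2 * K (R + 2)))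
      (fun R _ => hP0 R) (Finset.mem_range.2 (by omega))
  let b : ℝ → ℝ := fun s => min 1 (ε / (1 + P ⌈s⌉₊))
  have hb : Antitone b := fun s t hst => min_le_min le_rfl (by
    have := hPnn ⌈s⌉₊
    have := hPmono (Nat.ceil_mono hst)
    gcongr)
  have hb0 : ∀ s, 0 < b s := fun s => lt_min one_pos (by have := hPnn ⌈s⌉₊; positivity)
  obtain ⟨σ, hσ, hσ0, hσb, hDσ⟩ := exists_contDiff_pos_le (E := E) hb hb0
  have hσ1 : ∀ x, σ x ≤ 1 := fun x => (hσb x).trans (min_le_left _ _)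
  let φ : ContDiffBump (0 : E) := ⟨1 / 2, 1, by norm_num, by norm_num⟩
  let μ : Measure E := volume
  let ψ : E → ℝ := φ.normed μ
  have hψ : ContDiff ℝ (⊤ : ℕ∞) ψ := φ.contDiff_normed
  have hψ1 : ∀ η, 1 < ‖η‖ → ψ η = 0 := by
    intro η hη
    by_contra h0
    have : η ∈ Function.support ψ := h0
    rw [φ.support_normed_eq] at this
    have : ‖η‖ < 1 := by simpa [φ] using this
    linarith
  have hψnn : ∀ η, 0 ≤ ψ η := φ.nonneg_normed
  have hψI : ∫ η, ψ η ∂μ = 1 := φ.integral_normed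
  have hψint : ∀ u : E → ℝ, Continuous u → Integrable (fun η => ψ η * u η) μ := fun u hu =>
    (hψ.continuous.mul hu).integrable_of_hasCompactSupport φ.hasCompactSupport_normed.mul_right
  have hmean : ∀ u v : E → ℝ, Continuous u → Continuous v → ∀ a b : ℝ,
      (∀ η, ‖η‖ ≤ 1 → u η ≤ a * v η + b) →
      ∫ η, ψ η * u η ∂μ ≤ a * ∫ η, ψ η * v η ∂μ + b := by
    intro u v hu hv a b huv
    have h1 : a * ∫ η, ψ η * v η ∂μ + b = ∫ η, ψ η * (a * v η + b) ∂μ := by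
      have : ∀ η, ψ η * (a * v η + b) = a * (ψ η * v η) + ψ η * b := fun η => by ring
      simp only [this]
      rw [integral_add ((hψint v hv).const_mul a) (hψint _ continuous_const),
        integral_const_mul, integral_mul_const, hψI, one_mul]
    rw [h1]
    refine integral_mono (hψint u hu) (hψint _ (by fun_prop)) fun η => ?_
    rcases le_or_gt ‖η‖ 1 with h | h
    · exact mul_le_mul_of_nonneg_left (huv η h) (hψnn η)
    · simp [hψ1 η h]
  let W : E → ℝ := fun x => ∫ η, ψ η * U (x - σ x • η) ∂μ
  have hW : ContDiff ℝ (⊤ : ℕ∞) W := contDiff_integral_sub_smul hUc hψ hψ1 hσ hσ0 hσ1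
  have hshift : ∀ x, Continuous fun η => U (x - σ x • η) := fun x => by fun_prop
  have hdist : ∀ (x η : E), ‖η‖ ≤ 1 → ‖x - σ x • η‖ ≤ ‖x‖ + 1 ∧ ‖(x - σ x • η) - x‖ ≤ σ x := by
    intro x η hη
    have : ‖σ x • η‖ ≤ σ x := by
      rw [norm_smul, Real.norm_of_nonneg (hσ0 x).le]
      exact mul_le_of_le_one_right (hσ0 x).le hη
    refine ⟨(norm_sub_le _ _).trans (by linarith [hσ1 x]), by simpa using this⟩
  have hsmall : ∀ x : E, L (⌈‖x‖⌉₊ + 2) * (1 + 2 * K (⌈‖x‖⌉₊ + 2)) * b ‖x‖ ≤ ε := by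
    intro x
    have h1 := hPle ⌈‖x‖⌉₊
    have h2 := hPnn ⌈‖x‖⌉₊
    calc _ ≤ P ⌈‖x‖⌉₊ * (ε / (1 + P ⌈‖x‖⌉₊)) :=
          mul_le_mul h1 (min_le_right _ _) (hb0 _).le h2
      _ ≤ ε := by
          rw [mul_div_assoc', div_le_iff₀ (by positivity)]
          nlinarith
  have hUW : ∀ x η, ‖η‖ ≤ 1 → |U (x - σ x • η) - U x| ≤ L (⌈‖x‖⌉₊ + 2) * σ x := by
    intro x η hη
    obtain ⟨h1, h2⟩ := hdist x η hη
    have h3 := Nat.le_ceil ‖x‖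
    have h4 := hL (⌈‖x‖⌉₊ + 2) (x - σ x • η) x (by linarith) (by linarith)
    have h5 := hL (⌈‖x‖⌉₊ + 2) x (x - σ x • η) (by linarith) (by linarith)
    rw [norm_sub_rev] at h5
    have h6 := mul_le_mul_of_nonneg_left h2 (hL0 (⌈‖x‖⌉₊ + 2))
    rw [abs_le]
    constructor <;> linarith
  refine ⟨W, hW, fun x => ?_, fun x i => ?_⟩
  · have h1 := hmean _ (fun _ => 1) (hshift x) continuous_const (U x) (L (⌈‖x‖⌉₊ + 2) * σ x)
      fun η hη => by linarith [(abs_le.1 (hUW x η hη)).2]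
    have h2 := hmean (fun _ => U x) _ continuous_const (hshift x) 1 (L (⌈‖x‖⌉₊ + 2) * σ x)
      fun η hη => by linarith [(abs_le.1 (hUW x η hη)).1]
    simp only [mul_one, integral_mul_const, hψI, one_mul] at h1 h2
    have h3 : L (⌈‖x‖⌉₊ + 2) * σ x ≤ ε := by
      refine le_trans ?_ (hsmall x)
      have := hL0 (⌈‖x‖⌉₊ + 2)
      have := hK0 (⌈‖x‖⌉₊ + 2)
      exact mul_le_mul (le_mul_of_one_le_right (by assumption) (by linarith)) (hσb x) (hσ0 x).le
        (by positivity)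
    change |(∫ η, ψ η * U (x - σ x • η) ∂μ) - U x| ≤ ε
    rw [abs_le]
    constructor <;> linarith
  · set R : ℝ := ⌈‖x‖⌉₊ + 2 with hR
    set v := g x i with hv
    have hxR : ‖x‖ ≤ R - 2 := by rw [hR]; simpa using Nat.le_ceil ‖x‖
    have hvK : ‖v‖ ≤ K R := (hK R x x i (by linarith) (by linarith)).1
    have hLR := hL0 R
    have hKR := hK0 R
    have hstep : ∀ τ, 0 < τ → τ ≤ 1 → τ * K R ≤ 1 → W (x + τ • v) ≤ (1 - τ) * W x +
        (C R * τ ^ 2 + L R * (τ * (K R * σ x) + |σ (x + τ • v) - σ x|)) := by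
      intro τ hτ hτ1 hτK
      refine hmean _ _ (hshift (x + τ • v)) (hshift x) (1 - τ) _ fun η hη => ?_
      obtain ⟨h1, h2⟩ := hdist x η hη
      have h3 := (hdist (x + τ • v) η hη).1
      set ζ := x - σ x • η with hζ
      have hτv : ‖τ • v‖ ≤ 1 := by
        rw [norm_smul, Real.norm_of_nonneg hτ.le]
        exact (mul_le_mul_of_nonneg_left hvK hτ.le).trans hτK
      have hζR : ‖ζ‖ ≤ R := by linarith
      have hτg : ‖τ • g ζ i‖ ≤ 1 := by
        rw [norm_smul, Real.norm_of_nonneg hτ.le]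
        exact (mul_le_mul_of_nonneg_left (hK R ζ ζ i hζR hζR).1 hτ.le).trans hτK
      have h4 := norm_add_le x (τ • v)
      have h5 := norm_add_le ζ (τ • g ζ i)
      have h6 := hL R (x + τ • v - σ (x + τ • v) • η) (ζ + τ • g ζ i) (by linarith) (by linarith)
      have h7 := hC R ζ i τ hζR hτ.le hτ1
      have h8 : x + τ • v - σ (x + τ • v) • η - (ζ + τ • g ζ i)
          = τ • (v - g ζ i) - (σ (x + τ • v) - σ x) • η := by
        rw [hζ, smul_sub, sub_smul]; abel
      have h9 : ‖v - g ζ i‖ ≤ K R * σ x := by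
        refine (hK R x ζ i (by linarith) hζR).2.trans ?_
        rw [norm_sub_rev]
        exact mul_le_mul_of_nonneg_left h2 hKR
      have h10 : ‖x + τ • v - σ (x + τ • v) • η - (ζ + τ • g ζ i)‖
          ≤ τ * (K R * σ x) + |σ (x + τ • v) - σ x| := by
        rw [h8]
        refine (norm_sub_le _ _).trans (add_le_add ?_ ?_)
        · rw [norm_smul, Real.norm_of_nonneg hτ.le]
          exact mul_le_mul_of_nonneg_left h9 hτ.le
        · rw [norm_smul, Real.norm_eq_abs]
          exact mul_le_of_le_one_right (abs_nonneg _) hη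
      have h11 := mul_le_mul_of_nonneg_left h10 hLR
      linarith
    have hDW : Tendsto (fun τ : ℝ => τ⁻¹ • (W (x + τ • v) - W x)) (𝓝[>] 0)
        (𝓝 (fderiv ℝ W x v)) :=
      ((hW.differentiable (by simp) x).hasFDerivAt.hasLineDerivAt v).tendsto_slope_zero_right
    have hDs : Tendsto (fun τ : ℝ => τ⁻¹ • (σ (x + τ • v) - σ x)) (𝓝[>] 0)
        (𝓝 (fderiv ℝ σ x v)) :=
      ((hσ.differentiable (by simp) x).hasFDerivAt.hasLineDerivAt v).tendsto_slope_zero_right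
    have hid : Tendsto (fun τ : ℝ => τ) (𝓝[>] 0) (𝓝 0) := tendsto_id.mono_left inf_le_left
    have hlim : Tendsto (fun τ : ℝ => -W x + C R * τ + L R * (K R * σ x +
        |τ⁻¹ • (σ (x + τ • v) - σ x)|)) (𝓝[>] 0)
        (𝓝 (-W x + C R * 0 + L R * (K R * σ x + |fderiv ℝ σ x v|))) :=
      (tendsto_const_nhds.add (hid.const_mul _)).add
        ((tendsto_const_nhds.add hDs.abs).const_mul _)
    have hle : fderiv ℝ W x v ≤ -W x + C R * 0 + L R * (K R * σ x + |fderiv ℝ σ x v|) := by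
      refine le_of_tendsto_of_tendsto hDW hlim ?_
      have hsm : ∀ᶠ τ : ℝ in 𝓝[>] 0, τ * K R < 1 :=
        (hid.mul_const (K R)).eventually_lt_const (by simp)
      filter_upwards [self_mem_nhdsWithin, hsm, hid.eventually_lt_const one_pos] with τ h0 h1 h2
      have h0 : 0 < τ := h0
      have h3 := hstep τ h0 h2.le h1.le
      rw [smul_eq_mul, smul_eq_mul, abs_mul, abs_of_pos (inv_pos.2 h0), inv_mul_le_iff₀ h0]
      have h4 : τ * (-W x + C R * τ + L R * (K R * σ x + τ⁻¹ * |σ (x + τ • v) - σ x|))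
          = -τ * W x + (C R * τ ^ 2 + L R * (τ * (K R * σ x) + |σ (x + τ • v) - σ x|)) := by
        field_simp
        ring
      rw [h4]
      linarith
    have h1 : |fderiv ℝ σ x v| ≤ b ‖x‖ * K R :=
      ((fderiv ℝ σ x).le_opNorm v).trans (mul_le_mul (hDσ x) hvK (norm_nonneg _) (hb0 _).le)
    have h2 : U x ≤ W x + L R * σ x := by
      have := hmean (fun _ => U x) _ continuous_const (hshift x) 1 (L R * σ x)
        fun η hη => by linarith [(abs_le.1 (hUW x η hη)).1]
      simpa only [integral_mul_const, hψI, one_mul] using this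
    have h3 : L R * σ x ≤ L R * b ‖x‖ := mul_le_mul_of_nonneg_left (hσb x) hLR
    have h4 : L R * (K R * σ x + |fderiv ℝ σ x v|) ≤ L R * (K R * b ‖x‖ + b ‖x‖ * K R) := by
      gcongr
      exact hσb x
    have h5 := hsmall x
    nlinarith

/-- A smooth unbounded function vanishing exactly on `(-∞,0]`, with positive derivative on
`(0,∞)`. -/
theorem exists_contDiff_pos_iff : ∃ θ : ℝ → ℝ, ContDiff ℝ (⊤ : ℕ∞) θ ∧ Monotone θ ∧
    (∀ s, s ≤ 0 → θ s = 0 ∧ deriv θ s = 0) ∧ (∀ s, 0 < s → 0 < θ s ∧ 0 < deriv θ s) ∧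
    Tendsto θ atTop atTop := by
  let θ : ℝ → ℝ := fun s => s * expNegInvGlue s
  have hg : ContDiff ℝ (⊤ : ℕ∞) expNegInvGlue := expNegInvGlue.contDiff
  have h0 : ∀ s, s ≤ 0 → θ s = 0 := fun s hs => by simp [θ, expNegInvGlue.zero_of_nonpos hs]
  have hpos : ∀ s, 0 < s → 0 < θ s := fun s hs => mul_pos hs (expNegInvGlue.pos_of_pos hs)
  have hnn : ∀ s, 0 ≤ θ s := fun s => (le_or_gt s 0).elim (fun h => (h0 s h).ge)
    fun h => (hpos s h).le
  refine ⟨θ, contDiff_id.mul hg, fun s t hst => ?_, fun s hs => ⟨h0 s hs, ?_⟩,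
    fun s hs => ⟨hpos s hs, ?_⟩, ?_⟩
  · rcases le_or_gt s 0 with h | h
    · rw [h0 s h]
      exact hnn t
    · exact mul_le_mul hst (expNegInvGlue.monotone hst) (expNegInvGlue.nonneg _) (h.le.trans hst)
  · refine IsLocalMin.deriv_eq_zero (Eventually.of_forall fun t => ?_)
    rw [h0 s hs]
    exact hnn t
  · have h1 : HasDerivAt θ (1 * expNegInvGlue s + s * deriv expNegInvGlue s) s :=
      (hasDerivAt_id s).mul (hg.differentiable (by simp) s).hasDerivAt
    rw [h1.deriv]
    have h2 := expNegInvGlue.pos_of_pos hs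
    have h3 : 0 ≤ deriv expNegInvGlue s := expNegInvGlue.monotone.deriv_nonneg
    positivity
  · have h1 := expNegInvGlue.pos_of_pos one_pos
    refine tendsto_atTop_mono' _ ?_ (tendsto_id.atTop_mul_const h1)
    filter_upwards [eventually_ge_atTop 1] with s hs
    exact mul_le_mul_of_nonneg_left (expNegInvGlue.monotone hs) (by simp; linarith)

/-- A continuous rate `-q`, positive where `V` is, is bounded below by a function of `V` and the
norm of the state, of class `K` in its first and nonincreasing in its second argument. -/
theorem exists_classK_decay {E D : Type*} [NormedAddCommGroup E] [ProperSpace E]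
    [NormedAddCommGroup D] [ProperSpace D] {V : E → ℝ} {q : E × D → ℝ} (hV : Continuous V)
    (hq : Continuous q) (hV0 : ∀ ξ, 0 ≤ V ξ) (hq0 : ∀ ξ d, ‖d‖ ≤ 1 → q (ξ, d) ≤ 0)
    (hqneg : ∀ ξ d, ‖d‖ ≤ 1 → 0 < V ξ → q (ξ, d) < 0) :
    ∃ α : ℝ → ℝ → ℝ, (∀ r ∈ Ici (0 : ℝ), IsClassK fun s => α s r) ∧
      (∀ s ∈ Ici (0 : ℝ), AntitoneOn (fun r => α s r) (Ici 0)) ∧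
      ∀ ξ d, ‖d‖ ≤ 1 → q (ξ, d) ≤ -α (V ξ) ‖ξ‖ := by
  let B : ℝ → Set (E × D) := fun r => Metric.closedBall 0 r ×ˢ Metric.closedBall 0 1
  let w : ℝ → E × D → ℝ := fun s p => -q p + max (s - V p.1) 0
  let b : ℝ → ℝ → ℝ := fun s r => sInf (w s '' B r)
  have hB : ∀ r, IsCompact (B r) := fun r =>
    (isCompact_closedBall 0 r).prod (isCompact_closedBall 0 1)
  have hBne : ∀ r, 0 ≤ r → (B r).Nonempty := fun r hr =>
    ⟨(0, 0), Metric.mem_closedBall_self hr, Metric.mem_closedBall_self zero_le_one⟩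
  have hw : ∀ s, Continuous (w s) := fun s => by fun_prop
  have hd : ∀ r p, p ∈ B r → ‖p.2‖ ≤ 1 := fun r p hp => by simpa using hp.2
  have hwnn : ∀ s r, ∀ y ∈ w s '' B r, 0 ≤ y := by
    rintro s r _ ⟨p, hp, rfl⟩
    exact add_nonneg (neg_nonneg.2 (hq0 p.1 p.2 (hd r p hp))) (le_max_right _ _)
  have hbdd : ∀ s r, BddBelow (w s '' B r) := fun s r => ⟨0, hwnn s r⟩
  have hbnn : ∀ s r, 0 ≤ b s r := fun s r => Real.sInf_nonneg (hwnn s r)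
  have hle : ∀ s r p, p ∈ B r → b s r ≤ w s p := fun s r p hp =>
    csInf_le (hbdd s r) (mem_image_of_mem _ hp)
  have hpos : ∀ s r, 0 < s → 0 ≤ r → 0 < b s r := by
    intro s r hs hr
    obtain ⟨p, hp, hpb⟩ := (hB r).exists_sInf_image_eq (hBne r hr) (hw s).continuousOn
    simp only [b, hpb, w]
    have h1 := hq0 p.1 p.2 (hd r p hp)
    rcases eq_or_lt_of_le (hV0 p.1) with h | h
    · rw [← h, sub_zero, max_eq_left hs.le]
      linarith
    · have := hqneg p.1 p.2 (hd r p hp) h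
      linarith [le_max_right (s - V p.1) 0]
  have hmono : ∀ s t r, 0 ≤ r → s ≤ t → b s r ≤ b t r := by
    intro s t r hr hst
    refine le_csInf ((hBne r hr).image _) ?_
    rintro _ ⟨p, hp, rfl⟩
    refine (hle s r p hp).trans (add_le_add le_rfl (max_le_max (by linarith) le_rfl))
  have hlip : ∀ s t r, 0 ≤ r → s ≤ t → b t r ≤ b s r + (t - s) := by
    intro s t r hr hst
    rw [← sub_le_iff_le_add]
    refine le_csInf ((hBne r hr).image _) ?_
    rintro _ ⟨p, hp, rfl⟩
    rw [sub_le_iff_le_add]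
    refine (hle t r p hp).trans ?_
    have : max (t - V p.1) 0 ≤ max (s - V p.1) 0 + (t - s) :=
      max_le (by linarith [le_max_left (s - V p.1) 0]) (by linarith [le_max_right (s - V p.1) 0])
    simp only [w]
    linarith
  have hcont : ∀ r, 0 ≤ r → Continuous fun s => b s r := by
    intro r hr
    refine (LipschitzWith.of_dist_le_mul (K := 1) fun s t => ?_).continuous
    rw [Real.dist_eq, Real.dist_eq, NNReal.coe_one, one_mul]
    rcases le_total s t with h | h
    · have h1 := hmono s t r hr h
      have h2 := hlip s t r hr h
      rw [abs_of_nonpos (by linarith), abs_of_nonpos (by linarith)]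
      linarith
    · have h1 := hmono t s r hr h
      have h2 := hlip t s r hr h
      rw [abs_of_nonneg (by linarith), abs_of_nonneg (by linarith)]
      linarith
  refine ⟨fun s r => s / (1 + s) * b s r, fun r hr => ⟨?_, fun s hs t ht hst => ?_, by simp⟩,
    fun s hs r hr r' hr' hrr => ?_, fun ξ d hd1 => ?_⟩
  · refine (continuousOn_id.div (by fun_prop) fun s hs => ?_).mul (hcont r hr).continuousOn
    have : (0 : ℝ) ≤ s := hs
    positivity
  · have hs' : (0 : ℝ) ≤ s := hs
    have ht' : 0 < t := hs'.trans_lt hst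
    have h1 : s / (1 + s) < t / (1 + t) := by
      rw [div_lt_div_iff₀ (by positivity) (by positivity)]
      nlinarith
    exact (mul_le_mul_of_nonneg_left (hmono s t r hr hst.le) (by positivity)).trans_lt
      (mul_lt_mul_of_pos_right h1 (hpos t r ht' hr))
  · have hs' : (0 : ℝ) ≤ s := hs
    refine mul_le_mul_of_nonneg_left ?_ (by positivity)
    exact csInf_le_csInf (hbdd s r') ((hBne r hr).image _)
      (image_mono (prod_mono (Metric.closedBall_subset_closedBall hrr) le_rfl))
  · have h1 := hle (V ξ) ‖ξ‖ (ξ, d) ⟨by simp, by simpa using hd1⟩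
    have h2 := hbnn (V ξ) ‖ξ‖
    have h3 : V ξ / (1 + V ξ) ≤ 1 := by
      have := hV0 ξ
      rw [div_le_one (by positivity)]
      linarith
    have h4 := mul_le_of_le_one_left h2 h3
    simp only [w, sub_self, max_self, add_zero] at h1
    linarith

/-- A uniform `KL` estimate on the output `o` along the trajectories of `ż = H(z,w)`, `‖w‖ ≤ 1`,
yields a smooth function dominating `o` which is strictly decreasing wherever it is positive. -/
theorem exists_contDiff_strictly_decreasing {E D : Type*} [NormedAddCommGroup E]
    [InnerProductSpace ℝ E] [FiniteDimensional ℝ E] [NormedAddCommGroup D] [ProperSpace D]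
    [MeasurableSpace D] [BorelSpace D] {H : E × D → E} (hH : LocallyLipschitz H) {o : E → ℝ}
    (ho : LocallyLipschitz o) (ho0 : ∀ ξ, 0 ≤ o ξ) {β : ℝ → ℝ → ℝ} {ρ : ℝ → ℝ} (hβ : IsClassKL β)
    (hρ : MonotoneOn ρ (Ici 0))
    (hest : ∀ ξ w z T, Measurable w → (∀ s, ‖w s‖ ≤ 1) → IsTrajectoryOn H w ξ z T →
      ∀ t ∈ Icc 0 T, o (z t) ≤ β ‖ξ‖ t ∧ ‖z t‖ ≤ ρ ‖ξ‖) :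
    ∃ V : E → ℝ, ContDiff ℝ (⊤ : ℕ∞) V ∧ (∀ ξ, 0 ≤ V ξ) ∧ V 0 = 0 ∧
      (∃ α, IsClassKInfty α ∧ ∀ ξ, α (o ξ) ≤ V ξ) ∧
      (∀ ξ v, ‖v‖ ≤ 1 → fderiv ℝ V ξ (H (ξ, v)) ≤ 0) ∧
      ∀ ξ v, ‖v‖ ≤ 1 → 0 < V ξ → fderiv ℝ V ξ (H (ξ, v)) < 0 := by
  have : ProperSpace E := FiniteDimensional.proper ℝ E
  borelize E
  let ε : ℕ → ℝ := fun j => 1 / (j + 1)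
  have hε : ∀ j, 0 < ε j := fun j => Nat.one_div_pos_of_nat
  choose U hU0 hUo hUz hUL hUE using fun j => exists_exponentially_decaying hH ho hβ hρ hest (hε j)
  let g : E → {v : D // ‖v‖ ≤ 1} → E := fun ξ v => H (ξ, v)
  have hg : ∀ R, ∃ K, 0 ≤ K ∧ ∀ ξ ξ' i, ‖ξ‖ ≤ R → ‖ξ'‖ ≤ R →
      ‖g ξ i‖ ≤ K ∧ ‖g ξ i - g ξ' i‖ ≤ K * ‖ξ - ξ'‖ := by
    intro R
    obtain ⟨K, hK0, hK⟩ := hH.exists_norm_sub_le R 1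
    obtain ⟨M, hM0, hM⟩ := hH.continuous.exists_norm_le_of_norm_le R 1
    refine ⟨max K M, le_max_of_le_left hK0, fun ξ ξ' i hξ hξ' =>
      ⟨(hM ξ i hξ i.2).trans (le_max_right _ _), (hK ξ ξ' i hξ hξ' i.2).trans ?_⟩⟩
    gcongr
    exact le_max_left _ _
  have hE : ∀ j R, ∃ C, 0 ≤ C ∧ ∀ ξ i τ, ‖ξ‖ ≤ R → 0 ≤ τ → τ ≤ 1 →
      U j (ξ + τ • g ξ i) ≤ (1 - τ) * U j ξ + C * τ ^ 2 := by
    intro j R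
    obtain ⟨C, hC0, hC⟩ := hUE j R
    exact ⟨C, hC0, fun ξ i τ hξ => hC ξ i τ hξ i.2⟩
  choose W hW hWU hWd using fun j => exists_contDiff_fderiv_le (hUL j) hg (hE j) (hε j)
  obtain ⟨θ, hθ, hθm, hθ0, hθpos, hθtop⟩ := exists_contDiff_pos_iff
  have hθnn : ∀ s, 0 ≤ θ s := fun s => (le_or_gt s 0).elim (fun h => (hθ0 s h).1.ge)
    fun h => (hθpos s h).1.le
  let F : ℕ → E → ℝ := fun j ξ => θ (W j ξ - 2 * ε j)
  have hF : ∀ j, ContDiff ℝ (⊤ : ℕ∞) (F j) := fun j => hθ.comp ((hW j).sub contDiff_const)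
  have hFd : ∀ j ξ v, fderiv ℝ (F j) ξ v = deriv θ (W j ξ - 2 * ε j) * fderiv ℝ (W j) ξ v := by
    intro j ξ v
    have h1 := ((hθ.differentiable (by simp) _).hasDerivAt.comp_hasFDerivAt ξ
      (((hW j).differentiable (by simp) ξ).hasFDerivAt.sub_const (2 * ε j)))
    have h2 : fderiv ℝ (F j) ξ = _ := h1.fderiv
    rw [h2]
    simp
  have hdecW : ∀ j ξ v, ‖v‖ ≤ 1 → 2 * ε j < W j ξ → fderiv ℝ (W j) ξ (H (ξ, v)) < 0 := by
    intro j ξ v hv hlt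
    have h1 := hWd j ξ ⟨v, hv⟩
    have h2 := (abs_le.1 (hWU j ξ)).2
    exact h1.trans_lt (by linarith)
  have hFneg : ∀ j ξ v, ‖v‖ ≤ 1 → 0 < F j ξ → fderiv ℝ (F j) ξ (H (ξ, v)) < 0 := by
    intro j ξ v hv hpos
    have hlt : 0 < W j ξ - 2 * ε j := by
      by_contra hle
      exact hpos.ne' (hθ0 _ (not_lt.1 hle)).1
    rw [hFd]
    exact mul_neg_of_pos_of_neg (hθpos _ hlt).2 (hdecW j ξ v hv (by linarith))
  have hFle : ∀ j ξ v, ‖v‖ ≤ 1 → fderiv ℝ (F j) ξ (H (ξ, v)) ≤ 0 := by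
    intro j ξ v hv
    rcases le_or_gt (W j ξ - 2 * ε j) 0 with h | h
    · rw [hFd, (hθ0 _ h).2, zero_mul]
    · exact (hFneg j ξ v hv (hθpos _ h).1).le
  obtain ⟨c₀, hc₀, hc₀F⟩ := exists_pos_contDiff_tsum hF
  let c : ℕ → ℝ := fun j => min (c₀ j) ((1 / 2) ^ j)
  have hc : ∀ j, 0 < c j := fun j => lt_min (hc₀ j) (by positivity)
  obtain ⟨hV, hVs, hVd⟩ := hc₀F c (fun j => (hc j).le) fun j => min_le_left _ _
  have hcF : ∀ j ξ, 0 ≤ c j * F j ξ := fun j ξ => mul_nonneg (hc j).le (hθnn _)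
  refine ⟨fun ξ => ∑' j, c j * F j ξ, hV, fun ξ => tsum_nonneg fun j => hcF j ξ, ?_, ?_,
    fun ξ v hv => ?_, fun ξ v hv hpos => ?_⟩
  · have h0 : ∀ j, F j 0 = 0 := by
      intro j
      have h1 := (abs_le.1 (hWU j 0)).2
      have h2 := hε j
      rw [hUz j] at h1
      exact (hθ0 _ (by linarith)).1
    simp [h0]
  · let a : ℝ → ℝ := fun s => ∑' j, c j * θ (s - 4 * ε j)
    have hterm : ∀ s j, 0 ≤ c j * θ (s - 4 * ε j) := fun s j => mul_nonneg (hc j).le (hθnn _)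
    have hsum : ∀ s, Summable fun j => c j * θ (s - 4 * ε j) := by
      intro s
      refine Summable.of_nonneg_of_le (hterm s) (fun j => ?_)
        (summable_geometric_two.mul_right (θ s))
      exact mul_le_mul (min_le_right _ _) (hθm (by linarith [hε j])) (hθnn _) (by positivity)
    have ha : Monotone a := fun s t hst => (hsum s).tsum_le_tsum
      (fun j => mul_le_mul_of_nonneg_left (hθm (by linarith)) (hc j).le) (hsum t)
    have ha0 : a 0 = 0 := by
      have : ∀ j, θ (0 - 4 * ε j) = 0 := fun j => (hθ0 _ (by linarith [hε j])).1
      simp only [a, this, mul_zero, tsum_zero]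
    have hapos : ∀ s, 0 < s → 0 < a s := by
      intro s hs
      obtain ⟨j, hj⟩ := exists_nat_one_div_lt (show 0 < s / 4 by positivity)
      have hj : ε j < s / 4 := hj
      exact (hsum s).tsum_pos (hterm s) j (mul_pos (hc j) (hθpos _ (by linarith)).1)
    have hatop : Tendsto a atTop atTop := by
      refine tendsto_atTop_mono (fun s => (hsum s).le_tsum 0 fun j _ => hterm s j) ?_
      exact (hθtop.comp (tendsto_atTop_add_const_right _ (-(4 * ε 0)) tendsto_id)).const_mul_atTop
        (hc 0)
    obtain ⟨α, hα, -, -, hαa⟩ := exists_smooth_classKInfty_le (ha.monotoneOn _) ha0 hapos hatop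
    refine ⟨α, hα, fun ξ => (hαa _ (ho0 ξ)).trans ?_⟩
    refine (hsum _).tsum_le_tsum (fun j => ?_) (hVs ξ)
    refine mul_le_mul_of_nonneg_left (hθm ?_) (hc j).le
    linarith [(abs_le.1 (hWU j ξ)).1, hUo j ξ]
  · exact hasSum_le (fun j => mul_nonpos_of_nonneg_of_nonpos (hc j).le (hFle j ξ v hv))
      (hVd ξ (H (ξ, v))) hasSum_zero
  · obtain ⟨j, hj⟩ : ∃ j, 0 < F j ξ := by
      by_contra! hcon
      have : ∀ j, F j ξ = 0 := fun j => le_antisymm (hcon j) (hθnn _)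
      simp [this] at hpos
    exact hasSum_lt (fun j => mul_nonpos_of_nonneg_of_nonpos (hc j).le (hFle j ξ v hv))
      (mul_neg_of_pos_of_neg (hc j) (hFneg j ξ v hv hj)) (hVd ξ (H (ξ, v))) hasSum_zero

/-- A continuous function vanishing at the origin is bounded by a class-`K∞` function of the
norm. -/
theorem Continuous.exists_classKInfty_ge {E : Type*} [NormedAddCommGroup E] [ProperSpace E]
    {V : E → ℝ} (hV : Continuous V) (hV0 : ∀ ξ, 0 ≤ V ξ) (hz : V 0 = 0) :
    ∃ α, IsClassKInfty α ∧ ∀ ξ, V ξ ≤ α ‖ξ‖ := by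
  let M : ℝ → ℝ := fun s => sSup (V '' Metric.closedBall 0 (max s 0))
  have hne : ∀ s, (V '' Metric.closedBall 0 (max s 0)).Nonempty := fun s =>
    ⟨V 0, mem_image_of_mem _ (Metric.mem_closedBall_self (le_max_right _ _))⟩
  have hbdd : ∀ s, BddAbove (V '' Metric.closedBall 0 (max s 0)) := fun s =>
    ((isCompact_closedBall _ _).image hV).bddAbove
  have hM : Monotone M := fun s t hst => csSup_le_csSup (hbdd t) (hne s)
    (image_mono (Metric.closedBall_subset_closedBall (max_le_max hst le_rfl)))
  have hMnn : ∀ s, 0 ≤ M s := fun s => Real.sSup_nonneg (by rintro _ ⟨ξ, -, rfl⟩; exact hV0 ξ)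
  have hM0 : ∀ s ≤ 0, M s = 0 := fun s hs => by simp [M, max_eq_right hs, hz]
  have hlim : Tendsto M (𝓝[≥] 0) (𝓝 0) := by
    refine Metric.tendsto_nhdsWithin_nhds.2 fun e he => ?_
    obtain ⟨δ, hδ, hVδ⟩ := Metric.continuousAt_iff.1 hV.continuousAt (e / 2) (half_pos he)
    refine ⟨δ, hδ, fun s hs hsδ => ?_⟩
    have hs0 : (0 : ℝ) ≤ s := hs
    rw [Real.dist_0_eq_abs, abs_of_nonneg hs0] at hsδ
    rw [Real.dist_0_eq_abs, abs_of_nonneg (hMnn s)]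
    refine lt_of_le_of_lt (csSup_le (hne s) ?_) (half_lt_self he)
    rintro _ ⟨ξ, hξ, rfl⟩
    rw [max_eq_left hs0, Metric.mem_closedBall] at hξ
    have h1 := hVδ (hξ.trans_lt hsδ)
    rw [hz, Real.dist_0_eq_abs] at h1
    exact (le_abs_self _).trans h1.le
  obtain ⟨α, hα, hle⟩ := _root_.exists_classKInfty_ge hM hM0 hlim
  refine ⟨α, hα, fun ξ => le_trans ?_ (hle ‖ξ‖ (norm_nonneg _))⟩
  exact le_csSup (hbdd _) (mem_image_of_mem _ (by simp))

/-- Converse Lyapunov theorem: a robustly output stable BIBS system has an ROS-Lyapunov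
function. -/
theorem IsROS.exists_isROSLyapunov {n m p : ℕ}
    {f : EuclideanSpace ℝ (Fin n) → EuclideanSpace ℝ (Fin m) → EuclideanSpace ℝ (Fin n)}
    {h : EuclideanSpace ℝ (Fin n) → EuclideanSpace ℝ (Fin p)}
    {x : ℝ → EuclideanSpace ℝ (Fin n) → (ℝ → EuclideanSpace ℝ (Fin m)) →
      EuclideanSpace ℝ (Fin n)} (hR : IsROS f h)
    (hf : LocallyLipschitz fun q : EuclideanSpace ℝ (Fin n) × EuclideanSpace ℝ (Fin m) =>
      f q.1 q.2) (hh : LocallyLipschitz h) (hB : IsBIBS f x) :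
    ∃ V, IsROSLyapunov f h V := by
  obtain ⟨l, β, ρ, hl, hβ, hρ, hlL, hest⟩ := hR.exists_gain hf hh.continuous hB
  have hH := locallyLipschitz_closedLoop hf hh hlL
  have ho : LocallyLipschitz fun ξ => ‖h ξ‖ := lipschitzWith_one_norm.locallyLipschitz.comp hh
  obtain ⟨V, hV, hV0, hVz, ⟨α₁, hα₁, hα₁V⟩, hVle, hVlt⟩ :=
    exists_contDiff_strictly_decreasing hH ho (fun ξ => norm_nonneg _) hβ hρ hest
  obtain ⟨α₂, hα₂, hVα₂⟩ := hV.continuous.exists_classKInfty_ge hV0 hVz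
  have hq : Continuous fun q => fderiv ℝ V q.1 (closedLoop f h l q) :=
    ((hV.continuous_fderiv (by simp)).comp continuous_fst).clm_apply hH.continuous
  obtain ⟨α₃, hα₃, hα₃a, hα₃V⟩ := exists_classK_decay hV.continuous hq hV0 hVle hVlt
  obtain ⟨χ, hχ, hχl, hlχ⟩ := hl.exists_inverse
  refine ⟨V, hV, hV0, ⟨α₁, α₂, hα₁, hα₂, fun ξ => ⟨hα₁V ξ, hVα₂ ξ⟩⟩, χ, hχ.1, α₃, hα₃, hα₃a,
    fun ξ μ hμ => ?_⟩
  have h1 : ‖μ‖ ≤ l ‖h ξ‖ := by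
    rw [← hlχ _ (norm_nonneg μ)]
    exact hl.1.le_of_le (hχ.1.nonneg (norm_nonneg _)) hμ
  obtain ⟨d, hd, rfl⟩ : ∃ d, ‖d‖ ≤ 1 ∧ l ‖h ξ‖ • d = μ := by
    rcases eq_or_lt_of_le ((norm_nonneg μ).trans h1) with h0 | h0
    · rw [← h0, norm_le_zero_iff] at h1
      exact ⟨0, by simp, by simp [h1]⟩
    · refine ⟨(l ‖h ξ‖)⁻¹ • μ, ?_, smul_inv_smul₀ h0.ne' μ⟩
      rwa [norm_smul, norm_inv, Real.norm_of_nonneg h0.le, inv_mul_le_one₀ h0]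
  exact hα₃V ξ d hd

/-- A BIBS system is ROS if and only if it admits an ROS-Lyapunov function. -/
theorem ros_iff_exists_rosLyapunov {n m p : ℕ}
    (f : EuclideanSpace ℝ (Fin n) → EuclideanSpace ℝ (Fin m) → EuclideanSpace ℝ (Fin n))
    (h : EuclideanSpace ℝ (Fin n) → EuclideanSpace ℝ (Fin p))
    (x : ℝ → EuclideanSpace ℝ (Fin n) → (ℝ → EuclideanSpace ℝ (Fin m)) →
      EuclideanSpace ℝ (Fin n))
    (hf : LocallyLipschitz fun q : EuclideanSpace ℝ (Fin n) × EuclideanSpace ℝ (Fin m) =>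
      f q.1 q.2)
    (hf0 : f 0 0 = 0)
    (hh : LocallyLipschitz h) (hh0 : h 0 = 0)
    (hBIBS : IsBIBS f x) :
    IsROS f h ↔ ∃ V : EuclideanSpace ℝ (Fin n) → ℝ, IsROSLyapunov f h V := by
  exact ⟨fun hR => hR.exists_isROSLyapunov hf hh hBIBS, fun ⟨V, hV⟩ => hV.isROS hf hh hBIBS⟩
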